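/- arXiv:2504.05300 — 2 statements merged into one kernel-verified Lean document; each statement's English description precedes it below -/
import Mathlib

section
/- For every t ∈ [T], define δ_{t−1}(x) := ∫_{E_t^c} (4π² α_t² (1−α_t))^{−d/2} exp( −‖√α_t x − u‖₂² / (2 α_t (1−α_t)) ) · ∑_{k=1}^K π_k exp( −‖u − √ᾱ_t μ_k‖₂² / (2 α_t²) ) du. Then ∫_{ℝ^d} δ_{t−1}(x) dx ≤ C ( T^{−3} + (1−α_t)² log²(KT) ) for some absolute constant C > 0. -/
open MeasureTheory Real Finset
open scoped RealInnerProductSpace BigOperators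

noncomputable section

/-- Density of the Gaussian distribution `N(m, v I_d)` on `ℝ^d`. -/
def gaussV (d : ℕ) (v : ℝ) (m x : EuclideanSpace ℝ (Fin d)) : ℝ :=
  (2 * Real.pi * v) ^ (-(d : ℝ) / 2) * Real.exp (-‖x - m‖ ^ 2 / (2 * v))

/-- Density of the Gaussian mixture `∑_k w_k N(√abar μ_k, I_d)`. -/
def mixDensity (d K : ℕ) (w : Fin K → ℝ) (μ : Fin K → EuclideanSpace ℝ (Fin d))
    (abar : ℝ) (x : EuclideanSpace ℝ (Fin d)) : ℝ :=
  ∑ k, w k * gaussV d 1 (Real.sqrt abar • μ k) x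

/-- Posterior component weights `π_k^{(t)}(x)`. -/
def postWeight (d K : ℕ) (w : Fin K → ℝ) (μ : Fin K → EuclideanSpace ℝ (Fin d))
    (abar : ℝ) (k : Fin K) (x : EuclideanSpace ℝ (Fin d)) : ℝ :=
  w k * Real.exp (-‖x - Real.sqrt abar • μ k‖ ^ 2 / 2) /
    ∑ i, w i * Real.exp (-‖x - Real.sqrt abar • μ i‖ ^ 2 / 2)

/-- Closed form of the score `∇ log p_{X_t^GMM}` of the diffused GMM. -/
def gmmScore (d K : ℕ) (w : Fin K → ℝ) (μ : Fin K → EuclideanSpace ℝ (Fin d))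
    (abar : ℝ) (x : EuclideanSpace ℝ (Fin d)) : EuclideanSpace ℝ (Fin d) :=
  -x + Real.sqrt abar • ∑ k, postWeight d K w μ abar k x • μ k

/-- The Jacobian matrix `J_t(x)` of the diffused GMM score. -/
def gmmJac (d K : ℕ) (w : Fin K → ℝ) (μ : Fin K → EuclideanSpace ℝ (Fin d))
    (abar : ℝ) (x : EuclideanSpace ℝ (Fin d)) : Matrix (Fin d) (Fin d) ℝ :=
  Matrix.of fun i j =>
    (if i = j then (-1 : ℝ) else 0) +
      abar * ((∑ k, postWeight d K w μ abar k x * (μ k i * μ k j)) -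
        (∑ k, postWeight d K w μ abar k x * μ k i) *
          (∑ k, postWeight d K w μ abar k x * μ k j))

/-- The quantity `ζ_k^{(t)}(x)`, where `abar` plays the role of `ᾱ_t` and `a` that of `α_t`. -/
def zeta (d K : ℕ) (w : Fin K → ℝ) (μ : Fin K → EuclideanSpace ℝ (Fin d))
    (abar a : ℝ) (k : Fin K) (x : EuclideanSpace ℝ (Fin d)) : ℝ :=
  (1 - a ^ 2) / (2 * a ^ 2) *
      (‖x - Real.sqrt abar • μ k‖ ^ 2 -
        ∑ i, postWeight d K w μ abar i x * ‖x - Real.sqrt abar • μ i‖ ^ 2) +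
    (1 - a) / a ^ 2 *
      ⟪gmmScore d K w μ abar x,
        ∑ i, postWeight d K w μ abar i x • (Real.sqrt abar • (μ i - μ k))⟫

/-- The typical set `E_t`. -/
def Eset (d K T : ℕ) (w : Fin K → ℝ) (μ : Fin K → EuclideanSpace ℝ (Fin d))
    (abar a C₁ C₂ : ℝ) : Set (EuclideanSpace ℝ (Fin d)) :=
  {x | Matrix.trace (1 + gmmJac d K w μ abar x) ≤ C₁ * Real.log ((K : ℝ) * T) ∧
    ∑ k, postWeight d K w μ abar k x * Real.exp (-(zeta d K w μ abar a k x)) ≤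
      Real.exp (C₂ * (1 - a) ^ 2 * Real.log ((K : ℝ) * T) ^ 2)}

/-- The set `A_t`. -/
def Aset (d K T : ℕ) (w : Fin K → ℝ) (μ : Fin K → EuclideanSpace ℝ (Fin d))
    (abar cR C₇ : ℝ) : Set (EuclideanSpace ℝ (Fin d)) :=
  {x | -(C₇ * d * Real.log ((d : ℝ) * T)) ≤ Real.log (mixDensity d K w μ abar x) ∧
    ‖x‖ ≤ Real.sqrt (2 * (T : ℝ) ^ (2 * cR) + 16 * d * Real.log T)}

/-- The set `T_k`. -/
def Tset (d K T : ℕ) (μ : Fin K → EuclideanSpace ℝ (Fin d))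
    (abar C₅ : ℝ) (k : Fin K) : Set (EuclideanSpace ℝ (Fin d)) :=
  {x | ∀ i : Fin K,
    |⟪x - Real.sqrt abar • μ k, Real.sqrt abar • (μ i - μ k)⟫| ≤
      C₅ * Real.sqrt (abar * Real.log ((K : ℝ) * T)) * ‖μ i - μ k‖}

/-- Forward (diffused) marginal density at noise level `abar`, starting from density `f₀`. -/
def fwdDensity (d : ℕ) (f₀ : EuclideanSpace ℝ (Fin d) → ℝ) (abar : ℝ)
    (x : EuclideanSpace ℝ (Fin d)) : ℝ :=
  ∫ y, gaussV d (1 - abar) (Real.sqrt abar • y) x * f₀ y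

/-- Stein score of a density `p`. -/
def scoreOf (d : ℕ) (p : EuclideanSpace ℝ (Fin d) → ℝ)
    (x : EuclideanSpace ℝ (Fin d)) : EuclideanSpace ℝ (Fin d) :=
  gradient (fun y => Real.log (p y)) x

/-- Truncation (clipping) of a score estimate at radius `R`. -/
def clipFn (d : ℕ) (R : ℝ) (s : EuclideanSpace ℝ (Fin d) → EuclideanSpace ℝ (Fin d))
    (x : EuclideanSpace ℝ (Fin d)) : EuclideanSpace ℝ (Fin d) :=
  if ‖s x‖ ≤ R then s x else 0

/-- Total-variation distance between two densities on `ℝ^d`. -/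
def tvDist (d : ℕ) (p q : EuclideanSpace ℝ (Fin d) → ℝ) : ℝ :=
  (1 / 2) * ∫ x, |p x - q x|

/-- Density of the one-step (DDPM-type) reverse Gaussian transition with rate `a`
and drift field `s`, from `y` to `x`. -/
def ddpmKernel (d : ℕ) (a : ℝ) (s : EuclideanSpace ℝ (Fin d) → EuclideanSpace ℝ (Fin d))
    (y x : EuclideanSpace ℝ (Fin d)) : ℝ :=
  gaussV d (1 - a) ((Real.sqrt a)⁻¹ • (y + (1 - a) • s y)) x

/-- Density of `Y_{T-n}` for the DDPM sampler run with rates `α` and score estimates `s`. -/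
def ddpmDensity (d T : ℕ) (α : ℕ → ℝ)
    (s : ℕ → EuclideanSpace ℝ (Fin d) → EuclideanSpace ℝ (Fin d)) :
    ℕ → EuclideanSpace ℝ (Fin d) → ℝ
  | 0 => gaussV d 1 0
  | n + 1 => fun x =>
      ∫ y, ddpmKernel d (α (T - n)) (s (T - n)) y x * ddpmDensity d T α s n y

/-- Density (on `ℝ^d`) of `Ȳ_{T-n}^-` for the auxiliary reverse process. -/
def pbarMinus (d K T : ℕ) (w : Fin K → ℝ) (μ : Fin K → EuclideanSpace ℝ (Fin d))
    (αbar α : ℕ → ℝ) (C₁ C₂ : ℝ) : ℕ → EuclideanSpace ℝ (Fin d) → ℝ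
  | 0 => (Eset d K T w μ (αbar T) (α T) C₁ C₂).indicator (gaussV d 1 0)
  | n + 1 =>
      (Eset d K T w μ (αbar (T - n)) (α (T - n)) C₁ C₂).indicator fun x =>
        ∫ y in Eset d K T w μ (αbar (T - n)) (α (T - n)) C₁ C₂,
          ddpmKernel d (α (T - n)) (gmmScore d K w μ (αbar (T - n))) y x *
            min (mixDensity d K w μ (αbar (T - n)) y)
              (pbarMinus d K T w μ αbar α C₁ C₂ n y)

/-- The function `Δ_t(x) = p_{X_t^GMM}(x) - p_{Ȳ_t}(x)`. -/
def DeltaFn (d K T : ℕ) (w : Fin K → ℝ) (μ : Fin K → EuclideanSpace ℝ (Fin d))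
    (αbar α : ℕ → ℝ) (C₁ C₂ : ℝ) (t : ℕ) (x : EuclideanSpace ℝ (Fin d)) : ℝ :=
  mixDensity d K w μ (αbar t) x -
    min (mixDensity d K w μ (αbar t) x) (pbarMinus d K T w μ αbar α C₁ C₂ (T - t) x)

end

/-! Suppose first that `0 < α_t < 1`. Integrating out `x` turns the left-hand side into the
probability of `E_tᶜ` under the mixture of the `N(√ᾱ_t μ_k, α_t² I)`. Components of weight less than
`(KT)⁻⁴` are negligible. If `u` is drawn from any other component `k`, then outside an event of
probability at most `2K(KT)⁻⁴` all inner products `⟪u - √ᾱ_t μ_k, √ᾱ_t (μ_i - μ_k)⟫` are at most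
`3 √log(KT) ‖√ᾱ_t (μ_i - μ_k)‖`, so the posterior weights at `u` decay exponentially in the squared
distance of the means from `μ_k`. This bounds the moments that control the trace of `I + J_t` and
the `ζ_i`; as the `ζ_i` have posterior mean zero, `∑ π_i e^{-ζ_i} - 1` is of second order in
`1 - α_t`. When `(1 - α_t) log(KT)` is not small, the trivial bound `1` on the probability suffices.

The step size `c₁ log T / T` exceeds `1` for finitely many `T` only, but for those `α_t` may leave
`(0, 1)`. If `α_t ≤ 0`, the integrand does not depend on `x`. If `α_t > 1`, the factor
`exp(-‖√α_t x - u‖²/(2α_t(1 - α_t)))` grows. The trace condition holds everywhere once `C₁` is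
large, and `E_tᶜ` is an open set, given by a condition on softmax weights. If it is nonempty and
bounded, the outer integrand is bounded below by a positive constant; if it is unbounded, it
contains balls of exponentially decaying radius along a ray, and the inner integrals diverge. As the
Bochner integral of a non-integrable function is `0`, so is the left-hand side in all cases. -/

section GaussianIntegrals

variable {V : Type*} [NormedAddCommGroup V] [InnerProductSpace ℝ V] [FiniteDimensional ℝ V]
  [MeasurableSpace V] [BorelSpace V]

lemma lintegral_exp_neg_norm_sub_sq_div {v : ℝ} (hv : 0 < v) (m : V) :
    ∫⁻ u, ENNReal.ofReal (exp (-‖u - m‖ ^ 2 / (2 * v))) =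
      ENNReal.ofReal ((2 * π * v) ^ (Module.finrank ℝ V / 2 : ℝ)) := by
  have hint : ∫ u : V, exp (-‖u‖ ^ 2 / (2 * v)) =
      (2 * π * v) ^ (Module.finrank ℝ V / 2 : ℝ) := by
    have h := GaussianFourier.integral_rexp_neg_mul_sq_norm (V := V) (b := 1 / (2 * v))
      (by positivity)
    rw [show π / (1 / (2 * v)) = 2 * π * v by field_simp] at h
    rw [← h]
    congr 1 with u
    congr 1
    ring
  have hi : Integrable fun u : V => exp (-‖u‖ ^ 2 / (2 * v)) :=
    .of_integral_ne_zero (by rw [hint]; positivity)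
  rw [lintegral_sub_right_eq_self (fun u : V => ENNReal.ofReal (exp (-‖u‖ ^ 2 / (2 * v)))) m,
    ← hint, ofReal_integral_eq_lintegral_ofReal hi (ae_of_all _ fun _ => (exp_pos _).le)]

lemma lintegral_gaussian {v : ℝ} (hv : 0 < v) (m : V) :
    ∫⁻ u, ENNReal.ofReal ((2 * π * v) ^ (-(Module.finrank ℝ V : ℝ) / 2) *
      exp (-‖u - m‖ ^ 2 / (2 * v))) = 1 := by
  have hp : 0 < 2 * π * v := by positivity
  simp_rw [ENNReal.ofReal_mul (rpow_nonneg hp.le (-(Module.finrank ℝ V : ℝ) / 2))]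
  rw [lintegral_const_mul' _ _ ENNReal.ofReal_ne_top, lintegral_exp_neg_norm_sub_sq_div hv,
    ← ENNReal.ofReal_mul (by positivity), ← rpow_add hp]
  simp [neg_div]

lemma lintegral_gaussian_mul_exp_inner {v : ℝ} (hv : 0 < v) (m c : V) (s : ℝ) :
    ∫⁻ u, ENNReal.ofReal ((2 * π * v) ^ (-(Module.finrank ℝ V : ℝ) / 2) *
      exp (-‖u - m‖ ^ 2 / (2 * v)) * exp (⟪u - m, c⟫ - s)) =
      ENNReal.ofReal (exp (v * ‖c‖ ^ 2 / 2 - s)) := by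
  have complete_square (u : V) : exp (-‖u - m‖ ^ 2 / (2 * v)) * exp (⟪u - m, c⟫ - s) =
      exp (v * ‖c‖ ^ 2 / 2 - s) * exp (-‖u - (m + v • c)‖ ^ 2 / (2 * v)) := by
    rw [← Real.exp_add, ← Real.exp_add, ← sub_sub u m, norm_sub_sq_real (u - m),
      real_inner_smul_right, norm_smul, mul_pow, Real.norm_of_nonneg hv.le]
    congr 1
    field_simp
    ring
  simp_rw [mul_assoc _ (exp _) (exp _), complete_square, mul_left_comm _ (exp (_ - s)),
    ENNReal.ofReal_mul (exp_pos (_ - s)).le]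
  rw [lintegral_const_mul' _ _ ENNReal.ofReal_ne_top, lintegral_gaussian hv, mul_one]

/-- The Gaussian distribution `N(m, v I)` on a finite-dimensional space, given by its density. -/
noncomputable def isotropicGaussian (v : ℝ) (m : V) : Measure V :=
  volume.withDensity fun u => ENNReal.ofReal
    ((2 * π * v) ^ (-(Module.finrank ℝ V : ℝ) / 2) * exp (-‖u - m‖ ^ 2 / (2 * v)))

lemma isotropicGaussian_le_one {v : ℝ} (hv : 0 < v) (m : V) (S : Set V) :
    isotropicGaussian v m S ≤ 1 := by
  refine (measure_mono (Set.subset_univ S)).trans_eq ?_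
  rw [isotropicGaussian, withDensity_apply _ .univ, setLIntegral_univ, lintegral_gaussian hv]

lemma isotropicGaussian_le_inner {v : ℝ} (hv : 0 < v) (m c : V) (s : ℝ) :
    isotropicGaussian v m {u | s ≤ ⟪u - m, c⟫} ≤ ENNReal.ofReal (exp (v * ‖c‖ ^ 2 / 2 - s)) := by
  have hmeas : MeasurableSet {u : V | s ≤ ⟪u - m, c⟫} :=
    measurableSet_le measurable_const (by fun_prop)
  rw [isotropicGaussian, withDensity_apply _ hmeas, ← lintegral_gaussian_mul_exp_inner hv m]
  refine (setLIntegral_mono' hmeas fun u (hu : s ≤ _) => ENNReal.ofReal_le_ofReal ?_).trans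
    (setLIntegral_le_lintegral _ _)
  exact le_mul_of_one_le_right (by positivity) (one_le_exp (sub_nonneg.2 hu))

lemma isotropicGaussian_lt_abs_inner {v τ : ℝ} (hv : 0 < v) (hτ : 0 ≤ τ) (m c : V) :
    isotropicGaussian v m {u | τ * ‖c‖ < |⟪u - m, c⟫|} ≤
      ENNReal.ofReal (2 * exp (-(τ ^ 2 / (2 * v)))) := by
  rcases eq_or_ne c 0 with rfl | hc
  · simp
  set r := τ / (v * ‖c‖) with hr
  have hr0 : 0 ≤ r := by positivity
  have hrc : r * (τ * ‖c‖) = τ ^ 2 / v := by rw [hr]; field_simp [norm_ne_zero_iff.2 hc]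
  -- The Chernoff bound for the two half-spaces `±⟪u - m, r • c⟫ ≥ τ² / v`.
  have half_space (b : V) (hb : ‖b‖ = ‖r • c‖) :
      isotropicGaussian v m {u | τ ^ 2 / v ≤ ⟪u - m, b⟫} ≤
        ENNReal.ofReal (exp (-(τ ^ 2 / (2 * v)))) := by
    refine (isotropicGaussian_le_inner hv m b _).trans_eq ?_
    rw [hb, norm_smul, Real.norm_of_nonneg hr0, hr]
    congr 2
    field_simp
    ring
  rw [two_mul, ENNReal.ofReal_add (by positivity) (by positivity)]
  refine (measure_mono fun u (hu : τ * ‖c‖ < |⟪u - m, c⟫|) => ?_).trans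
    ((measure_union_le _ _).trans (add_le_add
      (half_space (r • c) rfl) (half_space (-(r • c)) (norm_neg _))))
  simp only [Set.mem_union, Set.mem_ofPred_eq, inner_neg_right, real_inner_smul_right, ← hrc,
    ← mul_neg]
  exact (lt_abs.1 hu).imp (fun h => by gcongr) fun h => by gcongr

/-- The double integral `∫ δ_{t-1}` of the theorem, with a set `S` in place of `E_t^c` and centres
`m k` in place of `√ᾱ_t μ_k`, and without the constant `(4π²α_t²(1-α_t))^{-d/2}`. -/
noncomputable def smoothedMass {ι : Type*} [Fintype ι] (w : ι → ℝ) (m : ι → V) (a : ℝ)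
    (S : Set V) : ℝ :=
  ∫ x : V, ∫ u in S, exp (-‖√a • x - u‖ ^ 2 / (2 * a * (1 - a))) *
    ∑ k, w k * exp (-‖u - m k‖ ^ 2 / (2 * a ^ 2))

lemma lintegral_enorm_smoothing {a : ℝ} (ha : 0 < a) (ha1 : a < 1) {r : ℝ} (hr : 0 ≤ r) (u : V) :
    ∫⁻ x : V, ‖exp (-‖√a • x - u‖ ^ 2 / (2 * a * (1 - a))) * r‖ₑ =
      ENNReal.ofReal ((2 * π * (1 - a)) ^ (Module.finrank ℝ V / 2 : ℝ) * r) := by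
  have hs : 0 < √a := sqrt_pos.2 ha
  have h1a : 0 < 1 - a := sub_pos.2 ha1
  have rescale (x : V) : ‖exp (-‖√a • x - u‖ ^ 2 / (2 * a * (1 - a))) * r‖ₑ =
      ENNReal.ofReal r * ENNReal.ofReal (exp (-‖x - (√a)⁻¹ • u‖ ^ 2 / (2 * (1 - a)))) := by
    have hx : √a • x - u = √a • (x - (√a)⁻¹ • u) := by
      rw [smul_sub, smul_smul, mul_inv_cancel₀ hs.ne', one_smul]
    rw [Real.enorm_of_nonneg (by positivity), ← ENNReal.ofReal_mul hr, mul_comm, hx, norm_smul,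
      mul_pow, Real.norm_of_nonneg hs.le, sq_sqrt ha.le]
    congr 3
    field_simp
  simp_rw [rescale]
  rw [lintegral_const_mul' _ _ ENNReal.ofReal_ne_top, lintegral_exp_neg_norm_sub_sq_div h1a,
    ← ENNReal.ofReal_mul hr, mul_comm]

variable {ι : Type*} [Fintype ι] {w : ι → ℝ} {m : ι → V}

lemma ofReal_smoothedMass_le {a : ℝ} (ha : 0 < a) (ha1 : a < 1) (hw : ∀ k, 0 ≤ w k) (S : Set V) :
    ENNReal.ofReal (smoothedMass w m a S) ≤
      ∫⁻ u in S, ENNReal.ofReal ((2 * π * (1 - a)) ^ (Module.finrank ℝ V / 2 : ℝ) *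
        ∑ k, w k * exp (-‖u - m k‖ ^ 2 / (2 * a ^ 2))) := by
  set ψ : V → ℝ := fun u => ∑ k, w k * exp (-‖u - m k‖ ^ 2 / (2 * a ^ 2))
  have hψ (u : V) : 0 ≤ ψ u := sum_nonneg fun k _ => mul_nonneg (hw k) (exp_pos _).le
  set H : V → V → ℝ := fun x u => exp (-‖√a • x - u‖ ^ 2 / (2 * a * (1 - a))) * ψ u with hH
  have hnonneg : 0 ≤ ∫ x, ∫ u in S, H x u :=
    integral_nonneg fun x => integral_nonneg fun u => mul_nonneg (exp_pos _).le (hψ u)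
  have hmeas : Measurable (Function.uncurry H) :=
    Continuous.measurable (by simp only [hH, ψ, Function.uncurry_def]; fun_prop)
  calc ENNReal.ofReal (∫ x, ∫ u in S, H x u)
      = ‖∫ x, ∫ u in S, H x u‖ₑ := (Real.enorm_of_nonneg hnonneg).symm
    _ ≤ ∫⁻ x, ‖∫ u in S, H x u‖ₑ := enorm_integral_le_lintegral_enorm _
    _ ≤ ∫⁻ x, ∫⁻ u in S, ‖H x u‖ₑ := lintegral_mono fun x => enorm_integral_le_lintegral_enorm _
    _ = ∫⁻ u in S, ∫⁻ x, ‖H x u‖ₑ := lintegral_lintegral_swap hmeas.enorm.aemeasurable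
    _ = _ := by simp_rw [hH, lintegral_enorm_smoothing ha ha1 (hψ _)]; rfl

lemma lintegral_mixture (a : ℝ) (hw : ∀ k, 0 ≤ w k) {S : Set V} (hS : MeasurableSet S) :
    ∫⁻ u in S, ENNReal.ofReal ((2 * π * a ^ 2) ^ (-(Module.finrank ℝ V : ℝ) / 2) *
        ∑ k, w k * exp (-‖u - m k‖ ^ 2 / (2 * a ^ 2))) =
      ∑ k, ENNReal.ofReal (w k) * isotropicGaussian (a ^ 2) (m k) S := by
  simp_rw [isotropicGaussian, withDensity_apply _ hS,
    ← lintegral_const_mul' _ _ ENNReal.ofReal_ne_top, ← ENNReal.ofReal_mul (hw _)]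
  rw [← lintegral_finsetSum _ fun k _ => by fun_prop]
  congr 1 with u
  rw [mul_sum, ENNReal.ofReal_sum_of_nonneg fun k _ => by have := hw k; positivity]
  simp_rw [mul_left_comm]

-- The constant of the theorem is the product of the normalising constants of `N(0, a²)`, for the
-- marginal of `u`, and of `N(0, 1 - a)`, for the conditional law of `x` given `u`.
lemma mul_smoothedMass_le {a : ℝ} (ha : 0 < a) (ha1 : a < 1) (hw : ∀ k, 0 ≤ w k) {S : Set V}
    (hS : MeasurableSet S) {B : ℝ} (hB : 0 ≤ B)
    (h : ∑ k, ENNReal.ofReal (w k) * isotropicGaussian (a ^ 2) (m k) S ≤ ENNReal.ofReal B) :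
    (4 * π ^ 2 * a ^ 2 * (1 - a)) ^ (-(Module.finrank ℝ V : ℝ) / 2) * smoothedMass w m a S ≤
      B := by
  have : 0 < 1 - a := sub_pos.2 ha1
  rw [← lintegral_mixture a hw hS] at h
  set n : ℝ := (Module.finrank ℝ V : ℝ)
  have hconst : (4 * π ^ 2 * a ^ 2 * (1 - a)) ^ (-n / 2) * (2 * π * (1 - a)) ^ (n / 2) =
      (2 * π * a ^ 2) ^ (-n / 2) := by
    rw [show 4 * π ^ 2 * a ^ 2 * (1 - a) = 2 * π * a ^ 2 * (2 * π * (1 - a)) by ring,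
      mul_rpow (by positivity) (by positivity), mul_assoc, ← rpow_add (by positivity)]
    simp [neg_div]
  have hc : 0 ≤ (4 * π ^ 2 * a ^ 2 * (1 - a)) ^ (-n / 2) := by positivity
  rw [← ENNReal.ofReal_le_ofReal_iff hB, ENNReal.ofReal_mul hc]
  refine le_trans ?_ h
  simp_rw [← hconst, mul_assoc _ (_ ^ (n / 2)), ENNReal.ofReal_mul hc]
  rw [lintegral_const_mul' _ _ ENNReal.ofReal_ne_top]
  gcongr
  exact ofReal_smoothedMass_le ha ha1 hw S

lemma mul_smoothedMass_le_one {a : ℝ} (ha : 0 < a) (ha1 : a < 1) (hw : ∀ k, 0 ≤ w k)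
    (hw1 : ∑ k, w k = 1) {S : Set V} (hS : MeasurableSet S) :
    (4 * π ^ 2 * a ^ 2 * (1 - a)) ^ (-(Module.finrank ℝ V : ℝ) / 2) * smoothedMass w m a S ≤
      1 := by
  refine mul_smoothedMass_le ha ha1 hw hS zero_le_one ?_
  calc ∑ k, ENNReal.ofReal (w k) * isotropicGaussian (a ^ 2) (m k) S
      ≤ ∑ k, ENNReal.ofReal (w k) := by
        gcongr with k
        exact mul_le_of_le_one_right' (isotropicGaussian_le_one (by positivity) _ _)
    _ = ENNReal.ofReal 1 := by rw [← ENNReal.ofReal_sum_of_nonneg fun k _ => hw k, hw1]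

end GaussianIntegrals

section Softmax

variable {ι : Type*} [Fintype ι]

/-- The softmax of `z`, the probability vector with entries proportional to `exp (z k)`. The
posterior weights `π_k^{(t)}(x)` are the softmax of affine functions of `x`. -/
noncomputable def softmax (z : ι → ℝ) (k : ι) : ℝ :=
  exp (z k) / ∑ i, exp (z i)

lemma continuous_softmax [Nonempty ι] : Continuous (softmax : (ι → ℝ) → ι → ℝ) := by
  unfold softmax
  exact continuous_pi fun k => .div (by fun_prop) (by fun_prop) fun z =>
    (sum_pos (fun i _ => exp_pos (z i)) univ_nonempty).ne'

lemma softmax_pos [Nonempty ι] (z : ι → ℝ) (k : ι) : 0 < softmax z k :=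
  div_pos (exp_pos _) (sum_pos (fun _ _ => exp_pos _) univ_nonempty)

lemma sum_softmax [Nonempty ι] (z : ι → ℝ) : ∑ k, softmax z k = 1 := by
  unfold softmax
  rw [← sum_div, div_self (sum_pos (fun i _ => exp_pos (z i)) univ_nonempty).ne']

lemma softmax_le_one [Nonempty ι] (z : ι → ℝ) (k : ι) : softmax z k ≤ 1 :=
  sum_softmax z ▸ single_le_sum (fun i _ => (softmax_pos z i).le) (mem_univ k)

lemma softmax_add_const (z : ι → ℝ) (c : ℝ) : softmax (fun k => z k + c) = softmax z := by
  funext k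
  unfold softmax
  simp_rw [Real.exp_add]
  rw [← sum_mul, mul_div_mul_right _ _ (exp_pos c).ne']

lemma softmax_eq_mul_exp_sub (z : ι → ℝ) (i k : ι) :
    softmax z i = softmax z k * exp (z i - z k) := by
  unfold softmax
  rw [Real.exp_sub]
  field_simp

lemma log_softmax [Nonempty ι] (z : ι → ℝ) (k : ι) :
    log (softmax z k) = z k - log (∑ i, exp (z i)) := by
  rw [softmax, Real.log_div (exp_pos _).ne' (sum_pos (fun _ _ => exp_pos _) univ_nonempty).ne',
    log_exp]

end Softmax

section WeightedMean

variable {ι V : Type*} [Fintype ι] [NormedAddCommGroup V] [InnerProductSpace ℝ V]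
  {p : ι → ℝ}

lemma sum_smul_sub_const (hp : ∑ i, p i = 1) (v : ι → V) (c : V) :
    ∑ i, p i • (v i - c) = ∑ i, p i • v i - c := by
  simp_rw [smul_sub]
  rw [sum_sub_distrib, ← sum_smul, hp, one_smul]

lemma sum_mul_norm_sub_sq (hp : ∑ i, p i = 1) (v : ι → V) (c : V) :
    ∑ i, p i * ‖v i - c‖ ^ 2 =
      ∑ i, p i * ‖v i‖ ^ 2 - 2 * ⟪∑ i, p i • v i, c⟫ + ‖c‖ ^ 2 := by
  have expand (i : ι) : p i * ‖v i - c‖ ^ 2 =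
      p i * ‖v i‖ ^ 2 - 2 * (p i * ⟪v i, c⟫) + p i * ‖c‖ ^ 2 := by
    rw [norm_sub_sq_real]; ring
  simp_rw [expand, sum_add_distrib, sum_sub_distrib, ← mul_sum, ← sum_mul, hp, one_mul, sum_inner,
    real_inner_smul_left]

lemma sum_mul_norm_sub_mean_sq (hp : ∑ i, p i = 1) (v : ι → V) :
    ∑ i, p i * ‖v i - ∑ j, p j • v j‖ ^ 2 =
      ∑ i, p i * ‖v i‖ ^ 2 - ‖∑ i, p i • v i‖ ^ 2 := by
  rw [sum_mul_norm_sub_sq hp, real_inner_self_eq_norm_sq]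
  ring

lemma sum_mul_norm_sub_mean_sq_le (hp : ∑ i, p i = 1) (v : ι → V) (c : V) :
    ∑ i, p i * ‖v i - ∑ j, p j • v j‖ ^ 2 ≤ ∑ i, p i * ‖v i - c‖ ^ 2 := by
  rw [sum_mul_norm_sub_sq hp v c, sum_mul_norm_sub_mean_sq hp]
  linarith [sq_nonneg ‖∑ i, p i • v i - c‖, norm_sub_sq_real (∑ i, p i • v i) c]

end WeightedMean

section Posterior

variable {d K : ℕ} {w : Fin K → ℝ} {μ : Fin K → EuclideanSpace ℝ (Fin d)} {abar a : ℝ}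

/-- The logarithm of the `k`-th term `w_k exp (-‖x - m_k‖² / 2)` of a mixture, up to the summand
`-‖x‖² / 2` common to all components; it is affine in `x`. -/
noncomputable def logit {ι V : Type*} [NormedAddCommGroup V] [InnerProductSpace ℝ V]
    (w : ι → ℝ) (m : ι → V) (x : V) (k : ι) : ℝ :=
  log (w k) - ‖m k‖ ^ 2 / 2 + ⟪x, m k⟫

lemma logit_sub_logit {ι V : Type*} [NormedAddCommGroup V] [InnerProductSpace ℝ V]
    (w : ι → ℝ) (m : ι → V) (x : V) (i k : ι) :
    logit w m x i - logit w m x k =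
      log (w i) - log (w k) + ⟪x - m k, m i - m k⟫ - ‖m i - m k‖ ^ 2 / 2 := by
  simp only [logit, norm_sub_sq_real, inner_sub_left, inner_sub_right, real_inner_self_eq_norm_sq,
    real_inner_comm (m i)]
  ring

lemma postWeight_eq_softmax (hw : ∀ k, 0 < w k) (k : Fin K) (x : EuclideanSpace ℝ (Fin d)) :
    postWeight d K w μ abar k x = softmax (logit w (fun i => √abar • μ i) x) k := by
  have hterm (i : Fin K) : w i * exp (-‖x - √abar • μ i‖ ^ 2 / 2) =
      exp (logit w (fun i => √abar • μ i) x i + -‖x‖ ^ 2 / 2) := by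
    rw [logit, add_assoc, ← Real.exp_log (hw i), ← Real.exp_add, Real.log_exp, norm_sub_sq_real]
    congr 1
    ring
  rw [postWeight, ← softmax_add_const _ (-‖x‖ ^ 2 / 2), softmax]
  simp_rw [hterm]

variable [NeZero K]

lemma postWeight_pos (hw : ∀ k, 0 < w k) (k : Fin K) (x : EuclideanSpace ℝ (Fin d)) :
    0 < postWeight d K w μ abar k x :=
  postWeight_eq_softmax hw k x ▸ softmax_pos _ k

lemma sum_postWeight (hw : ∀ k, 0 < w k) (x : EuclideanSpace ℝ (Fin d)) :
    ∑ k, postWeight d K w μ abar k x = 1 := by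
  simp_rw [postWeight_eq_softmax hw, sum_softmax]

lemma continuous_postWeight (hw : ∀ k, 0 < w k) (k : Fin K) :
    Continuous (postWeight d K w μ abar k) := by
  unfold postWeight
  exact .div (by fun_prop) (by fun_prop) fun x =>
    (sum_pos (fun i _ => mul_pos (hw i) (exp_pos _)) univ_nonempty).ne'

lemma trace_one_add_gmmJac (hw : ∀ k, 0 < w k) (x : EuclideanSpace ℝ (Fin d)) :
    Matrix.trace (1 + gmmJac d K w μ abar x) =
      abar * ∑ i, postWeight d K w μ abar i x *
        ‖μ i - ∑ j, postWeight d K w μ abar j x • μ j‖ ^ 2 := by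
  rw [sum_mul_norm_sub_mean_sq (sum_postWeight hw x), Matrix.trace_add, Matrix.trace_one]
  simp_rw [EuclideanSpace.norm_sq_eq, Matrix.trace, Matrix.diag, gmmJac, Matrix.of_apply,
    if_true, sum_add_distrib, mul_sum]
  rw [sum_comm (s := univ (α := Fin K)), ← sum_sub_distrib, mul_sum]
  simp [sq, mul_sum]

lemma trace_one_add_gmmJac_le_sum (hab : 0 ≤ abar) (hw : ∀ k, 0 < w k)
    (x c : EuclideanSpace ℝ (Fin d)) :
    Matrix.trace (1 + gmmJac d K w μ abar x) ≤
      ∑ i, postWeight d K w μ abar i x * ‖√abar • μ i - c‖ ^ 2 := by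
  refine le_of_eq_of_le ?_ (sum_mul_norm_sub_mean_sq_le (sum_postWeight hw x) _ c)
  simp_rw [trace_one_add_gmmJac hw, smul_comm _ (√abar), ← smul_sum, ← smul_sub, norm_smul, mul_pow,
    Real.norm_of_nonneg (sqrt_nonneg _), sq_sqrt hab, mul_left_comm _ abar, mul_sum]

lemma trace_one_add_gmmJac_le_mul_sq {A R : ℝ} (hA : 0 ≤ A) (hab : abar ≤ A) (hw : ∀ k, 0 < w k)
    (hμ : ∀ k, ‖μ k‖ ≤ R) (x : EuclideanSpace ℝ (Fin d)) :
    Matrix.trace (1 + gmmJac d K w μ abar x) ≤ A * R ^ 2 := by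
  have hp := sum_postWeight (abar := abar) (μ := μ) hw x
  have hp0 (i : Fin K) := (postWeight_pos (abar := abar) (μ := μ) hw i x).le
  rw [trace_one_add_gmmJac hw]
  gcongr
  · exact sum_nonneg fun i _ => mul_nonneg (hp0 i) (sq_nonneg _)
  calc _ ≤ ∑ i, postWeight d K w μ abar i x * ‖μ i - 0‖ ^ 2 := sum_mul_norm_sub_mean_sq_le hp μ 0
    _ ≤ ∑ i, postWeight d K w μ abar i x * R ^ 2 := by
      gcongr with i
      · exact hp0 i
      · exact (sub_zero (μ i)).symm ▸ hμ i
    _ = R ^ 2 := by rw [← sum_mul, hp, one_mul]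

/-- The exponent `-ζ_k` divided by `(1 - a) / a²`, for posterior weights `p`, centres `e` and a
point `z`, all relative to a common origin. -/
noncomputable def scaledExponent {ι V : Type*} [Fintype ι] [NormedAddCommGroup V]
    [InnerProductSpace ℝ V] (a : ℝ) (p : ι → ℝ) (e : ι → V) (z : V) (k : ι) : ℝ :=
  ⟪a • z + ∑ i, p i • e i, e k - ∑ i, p i • e i⟫ -
    (1 + a) / 2 * (‖e k‖ ^ 2 - ∑ i, p i * ‖e i‖ ^ 2)

lemma scaledExponent_eq {ι V : Type*} [Fintype ι] [NormedAddCommGroup V] [InnerProductSpace ℝ V]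
    {p : ι → ℝ} (hp : ∑ i, p i = 1) (ha : a ≠ 0) (e : ι → V) (z : V) (k : ι) :
    (1 - a) / a ^ 2 * scaledExponent a p e z k =
      -((1 - a ^ 2) / (2 * a ^ 2) * (‖e k - z‖ ^ 2 - ∑ i, p i * ‖e i - z‖ ^ 2) +
        (1 - a) / a ^ 2 * ⟪∑ i, p i • e i - z, ∑ i, p i • e i - e k⟫) := by
  rw [scaledExponent, sum_mul_norm_sub_sq hp, norm_sub_sq_real]
  generalize ∑ i, p i • e i = m
  simp only [inner_add_left, inner_sub_left, inner_sub_right, inner_smul_left,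
    real_inner_self_eq_norm_sq, real_inner_comm z, conj_trivial]
  field_simp
  ring

lemma neg_zeta_eq (ha : a ≠ 0) (hw : ∀ k, 0 < w k) (x c : EuclideanSpace ℝ (Fin d)) (k : Fin K) :
    -zeta d K w μ abar a k x = (1 - a) / a ^ 2 *
      scaledExponent a (fun i => postWeight d K w μ abar i x) (fun i => √abar • μ i - c)
        (x - c) k := by
  have hp := sum_postWeight (abar := abar) (μ := μ) hw x
  rw [scaledExponent_eq hp ha, zeta, gmmScore]
  have mean_sub : ∑ i, postWeight d K w μ abar i x • √abar • (μ i - μ k) =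
      √abar • ∑ i, postWeight d K w μ abar i x • μ i - √abar • μ k := by
    rw [← smul_sub, ← sum_smul_sub_const hp, smul_sum]
    simp_rw [smul_comm (√abar)]
  have mean_smul : ∑ i, postWeight d K w μ abar i x • √abar • μ i =
      √abar • ∑ i, postWeight d K w μ abar i x • μ i := by
    rw [smul_sum]
    simp_rw [smul_comm (√abar)]
  rw [mean_sub, sum_smul_sub_const hp, mean_smul]
  simp_rw [sub_sub_sub_cancel_right, norm_sub_rev x, neg_add_eq_sub]

lemma continuous_zeta (hw : ∀ k, 0 < w k) (k : Fin K) : Continuous (zeta d K w μ abar a k) := by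
  have (i : Fin K) : Continuous (postWeight d K w μ abar i) := continuous_postWeight hw i
  unfold zeta gmmScore
  fun_prop

lemma isClosed_Eset (hw : ∀ k, 0 < w k) (T : ℕ) (C₁ C₂ : ℝ) :
    IsClosed (Eset d K T w μ abar a C₁ C₂) := by
  have (i : Fin K) : Continuous (postWeight d K w μ abar i) := continuous_postWeight hw i
  have (i : Fin K) : Continuous (zeta d K w μ abar a i) := continuous_zeta hw i
  unfold Eset
  rw [Set.ofPred_and]
  refine .inter (isClosed_le ?_ continuous_const) (isClosed_le ?_ continuous_const)
  · simp_rw [trace_one_add_gmmJac hw]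
    fun_prop
  · fun_prop

end Posterior

section ExponentialMoments

variable {ι V : Type*} [Fintype ι] [NormedAddCommGroup V] [InnerProductSpace ℝ V]
  {p : ι → ℝ} {L : ℝ}

lemma exp_le_one_add_self_add_sq {x : ℝ} (hx : x ≤ 1) : exp x ≤ 1 + x + x ^ 2 := by
  rcases le_or_gt (-1) x with h | h
  · linarith [(abs_le.1 (Real.abs_exp_sub_one_sub_id_le (abs_le.2 ⟨h, hx⟩))).2]
  · nlinarith [Real.exp_le_one_iff.2 (show x ≤ 0 by linarith)]

lemma sum_mul_exp_le_of_sum_mul_eq_zero (hp0 : ∀ i, 0 ≤ p i) (hp : ∑ i, p i = 1) {ξ : ι → ℝ}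
    (hξ : ∑ i, p i * ξ i = 0) {r : ℝ} (hr : ∀ i, r * ξ i ≤ 1) :
    ∑ i, p i * exp (r * ξ i) ≤ 1 + r ^ 2 * ∑ i, p i * ξ i ^ 2 := by
  calc ∑ i, p i * exp (r * ξ i)
      ≤ ∑ i, p i * (1 + r * ξ i + (r * ξ i) ^ 2) := by
        gcongr with i
        · exact hp0 i
        · exact exp_le_one_add_self_add_sq (hr i)
    _ = ∑ i, (p i + r * (p i * ξ i) + r ^ 2 * (p i * ξ i ^ 2)) := by
        congr 1 with i
        ring
    _ = 1 + r ^ 2 * ∑ i, p i * ξ i ^ 2 := by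
        rw [sum_add_distrib, sum_add_distrib, ← mul_sum, ← mul_sum, hp, hξ, mul_zero, add_zero]

lemma mul_le_of_le_exp {q y : ℝ} (hq : 0 ≤ q) (hy : 0 ≤ y) (hL : 0 < L)
    (h : q ≤ exp (22 * L - 3 / 8 * y)) :
    q * y ≤ 200 * L * q + 4 * exp (-L) ∧
      q * y ^ 2 ≤ 40000 * L ^ 2 * q + 32 * exp (-L) := by
  have hE := exp_pos (-L)
  rcases le_or_gt y (200 * L) with hyL | hyL
  · have hyL2 : y ^ 2 ≤ (200 * L) ^ 2 := by gcongr
    constructor <;> nlinarith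
  · have hexp : q * exp (y / 4) ≤ exp (-L) :=
      calc q * exp (y / 4) ≤ exp (22 * L - 3 / 8 * y) * exp (y / 4) := by gcongr
        _ = exp (22 * L - y / 8) := by rw [← Real.exp_add]; ring_nf
        _ ≤ exp (-L) := exp_le_exp.2 (by linarith)
    have hquad := Real.quadratic_le_exp_of_nonneg (show 0 ≤ y / 4 by positivity)
    have hq1 : q * (y / 4) ≤ q * exp (y / 4) := by gcongr; nlinarith
    have hq2 : q * ((y / 4) ^ 2 / 2) ≤ q * exp (y / 4) := by gcongr; linarith
    have : 0 ≤ 200 * L * q := by positivity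
    have : 0 ≤ 40000 * L ^ 2 * q := by positivity
    constructor <;> linarith

lemma sum_mul_le_of_le_exp (hp0 : ∀ i, 0 ≤ p i) (hp : ∑ i, p i = 1) (hL : 1 / 2 ≤ L)
    (hι : Fintype.card ι * exp (-L) ≤ 1) {y : ι → ℝ} (hy : ∀ i, 0 ≤ y i)
    (h : ∀ i, p i ≤ exp (22 * L - 3 / 8 * y i)) :
    ∑ i, p i * y i ≤ 208 * L ∧ ∑ i, p i * y i ^ 2 ≤ 40128 * L ^ 2 := by
  have hterm (i : ι) := mul_le_of_le_exp (hp0 i) (hy i) (by linarith) (h i)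
  have hsum (b c : ℝ) : ∑ i, (b * p i + c * exp (-L)) = b + c * (Fintype.card ι * exp (-L)) := by
    rw [sum_add_distrib, ← mul_sum, hp, sum_const, card_univ, nsmul_eq_mul]
    ring
  constructor
  · calc ∑ i, p i * y i ≤ ∑ i, (200 * L * p i + 4 * exp (-L)) := sum_le_sum fun i _ => (hterm i).1
      _ ≤ 208 * L := by rw [hsum]; linarith
  · calc ∑ i, p i * y i ^ 2 ≤ ∑ i, (40000 * L ^ 2 * p i + 32 * exp (-L)) :=
          sum_le_sum fun i _ => (hterm i).2
      _ ≤ 40128 * L ^ 2 := by rw [hsum]; nlinarith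

lemma sum_mul_scaledExponent (hp : ∑ i, p i = 1) (a : ℝ) (e : ι → V) (z : V) :
    ∑ k, p k * scaledExponent a p e z k = 0 := by
  have hmean : ∑ k, p k • (e k - ∑ i, p i • e i) = 0 := by
    rw [sum_smul_sub_const hp, sub_self]
  have hvar : ∑ k, p k * (‖e k‖ ^ 2 - ∑ i, p i * ‖e i‖ ^ 2) = 0 := by
    rw [← sub_self (∑ i, p i * ‖e i‖ ^ 2)]
    exact sum_smul_sub_const hp _ _
  set m := ∑ i, p i • e i
  calc ∑ k, p k * scaledExponent a p e z k
      = ⟪a • z + m, ∑ k, p k • (e k - m)⟫ -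
          (1 + a) / 2 * ∑ k, p k * (‖e k‖ ^ 2 - ∑ i, p i * ‖e i‖ ^ 2) := by
        simp_rw [inner_sum, mul_sum, ← sum_sub_distrib, real_inner_smul_right, scaledExponent]
        congr 1 with k
        ring
    _ = 0 := by rw [hmean, hvar, inner_zero_right, mul_zero, sub_zero]

lemma norm_sum_smul_le_sqrt (hp0 : ∀ i, 0 ≤ p i) (hp : ∑ i, p i = 1) {e : ι → V} {B : ℝ}
    (h : ∑ i, p i * ‖e i‖ ^ 2 ≤ B) : ∑ i, p i * ‖e i‖ ≤ √B ∧ ‖∑ i, p i • e i‖ ≤ √B := by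
  have hmean : ∑ i, p i * ‖e i‖ ≤ √B :=
    Real.le_sqrt_of_sq_le ((Real.pow_arith_mean_le_arith_mean_pow univ p _ (fun i _ => hp0 i) hp
      (fun i _ => norm_nonneg _) 2).trans h)
  refine ⟨hmean, (norm_sum_le _ _).trans (le_of_eq_of_le ?_ hmean)⟩
  simp_rw [norm_smul, Real.norm_of_nonneg (hp0 _)]

lemma abs_inner_sum_smul_le (hp0 : ∀ i, 0 ≤ p i) {e : ι → V} {z : V} {C : ℝ}
    (hz : ∀ i, |⟪z, e i⟫| ≤ C * ‖e i‖) : |⟪z, ∑ i, p i • e i⟫| ≤ C * ∑ i, p i * ‖e i‖ := by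
  simp_rw [inner_sum, real_inner_smul_right]
  refine (abs_sum_le_sum_abs _ _).trans ?_
  simp_rw [mul_sum, abs_mul, abs_of_nonneg (hp0 _), mul_left_comm C]
  gcongr with i
  · exact hp0 i
  · exact hz i

lemma scaledExponent_bounds (hp0 : ∀ i, 0 ≤ p i) (hp : ∑ i, p i = 1) (hL : 0 ≤ L) {a : ℝ}
    (ha0 : 0 ≤ a) (ha1 : a ≤ 1) {e : ι → V} {z : V} (h : ∑ i, p i * ‖e i‖ ^ 2 ≤ 208 * L)
    (hz : ∀ i, |⟪z, e i⟫| ≤ 3 * √L * ‖e i‖) (k : ι) :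
    scaledExponent a p e z k ≤ 415 * L ∧
      |scaledExponent a p e z k| ≤ 3 / 2 * ‖e k‖ ^ 2 + 640 * L := by
  obtain ⟨hmean, hnorm⟩ := norm_sum_smul_le_sqrt hp0 hp h
  set m := ∑ i, p i • e i
  set s := √L
  have hs : s ^ 2 = L := sq_sqrt hL
  have h15 : √(208 * L) ≤ 15 * s :=
    Real.sqrt_le_iff.2 ⟨by positivity, by rw [← hs]; nlinarith⟩
  have hm2 : ‖m‖ ^ 2 ≤ 208 * L :=
    (pow_le_pow_left₀ (norm_nonneg _) hnorm 2).trans_eq (sq_sqrt (by positivity))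
  have hzm : |⟪z, m⟫| ≤ 45 * L :=
    calc |⟪z, m⟫| ≤ 3 * s * ∑ i, p i * ‖e i‖ := abs_inner_sum_smul_le hp0 hz
      _ ≤ 3 * s * (15 * s) := by gcongr; exact hmean.trans h15
      _ = 45 * L := by rw [← hs]; ring
  have hme : |⟪m, e k⟫| ≤ 15 * s * ‖e k‖ :=
    (abs_real_inner_le_norm _ _).trans (by gcongr; exact hnorm.trans h15)
  have hyoung : 18 * s * ‖e k‖ ≤ ‖e k‖ ^ 2 / 2 + 162 * L := by
    rw [← hs]; linarith [sq_nonneg (‖e k‖ - 18 * s)]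
  have haze : |a * ⟪z, e k⟫| ≤ 3 * s * ‖e k‖ := by
    rw [abs_mul, abs_of_nonneg ha0]
    exact (mul_le_of_le_one_left (abs_nonneg _) ha1).trans (hz k)
  have hazm : |a * ⟪z, m⟫| ≤ 45 * L := by
    rw [abs_mul, abs_of_nonneg ha0]
    exact (mul_le_of_le_one_left (abs_nonneg _) ha1).trans hzm
  have hexpand : scaledExponent a p e z k = a * ⟪z, e k⟫ - a * ⟪z, m⟫ + ⟪m, e k⟫ - ‖m‖ ^ 2 -
      (1 + a) / 2 * ‖e k‖ ^ 2 + (1 + a) / 2 * ∑ i, p i * ‖e i‖ ^ 2 := by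
    rw [scaledExponent, inner_add_left, real_inner_smul_left, inner_sub_right, inner_sub_right,
      real_inner_self_eq_norm_sq]
    ring
  have hA0 : 0 ≤ ∑ i, p i * ‖e i‖ ^ 2 := sum_nonneg fun i _ => mul_nonneg (hp0 i) (sq_nonneg _)
  rw [abs_le] at *
  rw [hexpand]
  refine ⟨?_, ?_, ?_⟩ <;> nlinarith [sq_nonneg ‖e k‖, sq_nonneg ‖m‖]

lemma sum_mul_exp_scaledExponent_le (hp0 : ∀ i, 0 ≤ p i) (hp : ∑ i, p i = 1) (hL : 0 ≤ L) {a : ℝ}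
    (ha0 : 0 ≤ a) (ha1 : a ≤ 1) {e : ι → V} {z : V} (h2 : ∑ i, p i * ‖e i‖ ^ 2 ≤ 208 * L)
    (h4 : ∑ i, p i * (‖e i‖ ^ 2) ^ 2 ≤ 40128 * L ^ 2)
    (hz : ∀ i, |⟪z, e i⟫| ≤ 3 * √L * ‖e i‖) {r : ℝ} (hr : 0 ≤ r) (hrL : r * (415 * L) ≤ 1) :
    ∑ k, p k * exp (r * scaledExponent a p e z k) ≤ 1 + r ^ 2 * (1000000 * L ^ 2) := by
  have hbound (k : ι) := scaledExponent_bounds hp0 hp hL ha0 ha1 h2 hz k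
  have hsq (k : ι) :
      scaledExponent a p e z k ^ 2 ≤ 9 / 2 * (‖e k‖ ^ 2) ^ 2 + 819200 * L ^ 2 := by
    have := sq_le_sq' (abs_le.1 (hbound k).2).1 (abs_le.1 (hbound k).2).2
    linarith [sq_nonneg (3 / 2 * ‖e k‖ ^ 2 - 640 * L)]
  refine (sum_mul_exp_le_of_sum_mul_eq_zero hp0 hp (sum_mul_scaledExponent hp a e z)
    fun k => (mul_le_mul_of_nonneg_left (hbound k).1 hr).trans hrL).trans ?_
  gcongr
  calc ∑ k, p k * scaledExponent a p e z k ^ 2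
      ≤ ∑ k, p k * (9 / 2 * (‖e k‖ ^ 2) ^ 2 + 819200 * L ^ 2) := by
        gcongr with k
        · exact hp0 k
        · exact hsq k
    _ = 9 / 2 * ∑ k, p k * (‖e k‖ ^ 2) ^ 2 + 819200 * L ^ 2 := by
        simp_rw [mul_add, sum_add_distrib, ← sum_mul, hp, one_mul, mul_left_comm (p _), ← mul_sum]
    _ ≤ 1000000 * L ^ 2 := by linarith [sq_nonneg L]

end ExponentialMoments

section TypicalSet

lemma softmax_logit_le_exp {ι V : Type*} [Fintype ι] [Nonempty ι] [NormedAddCommGroup V]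
    [InnerProductSpace ℝ V] {w : ι → ℝ} {m : ι → V} {L : ℝ} (hL : 0 ≤ L) {u : V} {i k : ι}
    (hi0 : 0 ≤ w i) (hi1 : w i ≤ 1) (hk : exp (-(4 * L)) ≤ w k)
    (hu : |⟪u - m k, m i - m k⟫| ≤ 3 * √L * ‖m i - m k‖) :
    softmax (logit w m u) i ≤ exp (22 * L - 3 / 8 * ‖m i - m k‖ ^ 2) := by
  have hlogi : log (w i) ≤ 0 := log_nonpos hi0 hi1
  have hlogk : -(4 * L) ≤ log (w k) := (le_log_iff_exp_le ((exp_pos _).trans_le hk)).2 hk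
  have hinner := (abs_le.1 hu).2
  have hs : √L ^ 2 = L := sq_sqrt hL
  rw [softmax_eq_mul_exp_sub _ i k, logit_sub_logit]
  refine (mul_le_of_le_one_left (exp_pos _).le (softmax_le_one _ k)).trans (exp_le_exp.2 ?_)
  nlinarith [sq_nonneg (‖m i - m k‖ - 12 * √L)]

variable {d K T : ℕ} {w : Fin K → ℝ} {μ : Fin K → EuclideanSpace ℝ (Fin d)} {abar a C₁ C₂ : ℝ}
  [NeZero K]

lemma card_mul_exp_neg_log_le_one (hT : 1 ≤ T) : K * exp (-log (K * T)) ≤ 1 := by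
  have hK : (0 : ℝ) < K := by exact_mod_cast NeZero.pos K
  have hT1 : (1 : ℝ) ≤ T := by exact_mod_cast hT
  rw [Real.exp_neg, Real.exp_log (by positivity), ← div_eq_mul_inv, div_le_one (by positivity)]
  exact le_mul_of_one_le_right hK.le hT1

lemma mem_Eset_of_abs_inner_le (hT : 1 ≤ T) (hw0 : ∀ k, 0 < w k) (hw1 : ∀ k, w k ≤ 1)
    (hab : 0 ≤ abar) (ha1 : a ≤ 1) (hC₁ : 208 ≤ C₁) (hC₂ : 16000000 ≤ C₂)
    (hL : 1 / 2 ≤ log (K * T)) (haL : (1 - a) * log (K * T) ≤ 1 / 2000) {k : Fin K}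
    (hk : exp (-(4 * log (K * T))) ≤ w k) {u : EuclideanSpace ℝ (Fin d)}
    (hu : ∀ i, |⟪u - √abar • μ k, √abar • μ i - √abar • μ k⟫| ≤
      3 * √(log (K * T)) * ‖√abar • μ i - √abar • μ k‖) :
    u ∈ Eset d K T w μ abar a C₁ C₂ := by
  have hcard := card_mul_exp_neg_log_le_one (K := K) hT
  rw [Eset, Set.mem_ofPred_eq]
  set L := log (K * T)
  have : 0 ≤ 1 - a := sub_nonneg.2 ha1
  have ha : 1 / 2 ≤ a := by nlinarith
  set r := (1 - a) / a ^ 2 with hr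
  have hr0 : 0 ≤ r := by positivity
  have hr4 : r ≤ 4 * (1 - a) := by
    have : 1 ≤ 4 * a ^ 2 := by nlinarith
    rw [hr, div_le_iff₀ (by positivity)]
    nlinarith
  have hp0 (i : Fin K) := (postWeight_pos (μ := μ) (abar := abar) hw0 i u).le
  have hp := sum_postWeight (μ := μ) (abar := abar) hw0 u
  obtain ⟨h2, h4⟩ := sum_mul_le_of_le_exp hp0 hp hL (by rwa [Fintype.card_fin])
    (y := fun i => ‖√abar • μ i - √abar • μ k‖ ^ 2) (fun i => sq_nonneg _) fun i => by
      rw [postWeight_eq_softmax hw0]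
      exact softmax_logit_le_exp (by linarith) (hw0 i).le (hw1 i) hk (hu i)
  constructor
  · calc Matrix.trace (1 + gmmJac d K w μ abar u) ≤ 208 * L :=
          (trace_one_add_gmmJac_le_sum hab hw0 u _).trans h2
      _ ≤ C₁ * L := by gcongr
  · calc ∑ i, postWeight d K w μ abar i u * exp (-(zeta d K w μ abar a i u))
        ≤ 1 + r ^ 2 * (1000000 * L ^ 2) := by
          simp_rw [neg_zeta_eq (by linarith : a ≠ 0) hw0 u (√abar • μ k)]
          exact sum_mul_exp_scaledExponent_le hp0 hp (by linarith) (by linarith) ha1 h2 h4 hu hr0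
            (by nlinarith)
      _ ≤ 1 + (4 * (1 - a)) ^ 2 * (1000000 * L ^ 2) := by gcongr
      _ = 16000000 * (1 - a) ^ 2 * L ^ 2 + 1 := by ring
      _ ≤ C₂ * (1 - a) ^ 2 * L ^ 2 + 1 := by gcongr
      _ ≤ exp (C₂ * (1 - a) ^ 2 * L ^ 2) := add_one_le_exp _

lemma isotropicGaussian_compl_Eset_le (hT : 1 ≤ T) (hw0 : ∀ k, 0 < w k) (hw1 : ∀ k, w k ≤ 1)
    (hab : 0 ≤ abar) (ha1 : a ≤ 1) (hC₁ : 208 ≤ C₁) (hC₂ : 16000000 ≤ C₂)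
    (hL : 1 / 2 ≤ log (K * T)) (haL : (1 - a) * log (K * T) ≤ 1 / 2000) {k : Fin K}
    (hk : exp (-(4 * log (K * T))) ≤ w k) :
    isotropicGaussian (a ^ 2) (√abar • μ k) (Eset d K T w μ abar a C₁ C₂)ᶜ ≤
      ENNReal.ofReal (K * (2 * exp (-(4 * log (K * T))))) := by
  have ha : 1 / 2 ≤ a := by nlinarith
  have hcover : (Eset d K T w μ abar a C₁ C₂)ᶜ ⊆ ⋃ i, {u | 3 * √(log (K * T)) *
      ‖√abar • μ i - √abar • μ k‖ < |⟪u - √abar • μ k, √abar • μ i - √abar • μ k⟫|} := by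
    refine Set.compl_subset_comm.1 fun u hu =>
      mem_Eset_of_abs_inner_le hT hw0 hw1 hab ha1 hC₁ hC₂ hL haL hk fun i => ?_
    by_contra! h
    exact hu (Set.mem_iUnion.2 ⟨i, h⟩)
  refine (measure_mono hcover).trans ((measure_iUnion_fintype_le _ _).trans ?_)
  calc _ ≤ ∑ _i : Fin K, ENNReal.ofReal (2 * exp (-(4 * log (K * T)))) := by
        refine sum_le_sum fun i _ => (isotropicGaussian_lt_abs_inner (by positivity) (by positivity)
          _ _).trans (ENNReal.ofReal_le_ofReal ?_)
        rw [mul_pow, sq_sqrt (by linarith)]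
        gcongr
        rw [le_div_iff₀ (by positivity)]
        nlinarith
    _ = _ := by
        rw [sum_const, card_univ, Fintype.card_fin, nsmul_eq_mul,
          ENNReal.ofReal_mul (Nat.cast_nonneg K), ENNReal.ofReal_natCast]

lemma card_mul_exp_neg_four_log_le (hT : 1 ≤ T) :
    K * (3 * exp (-(4 * log (K * T)))) ≤ 3 / (T : ℝ) ^ 3 := by
  have hK : (1 : ℝ) ≤ K := by exact_mod_cast NeZero.pos K
  have hT1 : (1 : ℝ) ≤ T := by exact_mod_cast hT
  have hexp : exp (-(4 * log (K * T))) = 1 / (K * T : ℝ) ^ 4 := by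
    rw [Real.exp_neg, mul_comm, Real.exp_mul, Real.exp_log (by positivity), one_div]
    norm_cast
  rw [hexp, mul_pow, mul_one_div, mul_div_assoc', div_le_div_iff₀ (by positivity) (by positivity)]
  have hK4 : (K : ℝ) ≤ K ^ 4 := le_self_pow₀ hK (by norm_num)
  have hT4 : (T : ℝ) ^ 3 ≤ T ^ 4 := pow_le_pow_right₀ hT1 (by norm_num)
  linarith [mul_le_mul hK4 hT4 (by positivity) (by positivity)]

lemma sum_mul_isotropicGaussian_compl_Eset_le (hT : 1 ≤ T) (hw0 : ∀ k, 0 < w k)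
    (hw : ∑ k, w k = 1) (hab : 0 ≤ abar) (ha1 : a ≤ 1) (hC₁ : 208 ≤ C₁) (hC₂ : 16000000 ≤ C₂)
    (hL : 1 / 2 ≤ log (K * T)) (haL : (1 - a) * log (K * T) ≤ 1 / 2000) :
    ∑ k, ENNReal.ofReal (w k) *
        isotropicGaussian (a ^ 2) (√abar • μ k) (Eset d K T w μ abar a C₁ C₂)ᶜ ≤
      ENNReal.ofReal (3 / (T : ℝ) ^ 3) := by
  have ha : 1 / 2 ≤ a := by nlinarith
  have hw1 (k : Fin K) : w k ≤ 1 :=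
    hw ▸ single_le_sum (fun i _ => (hw0 i).le) (mem_univ k)
  set ε := exp (-(4 * log (K * T))) with hε
  have hε0 : 0 < ε := exp_pos _
  have hterm (k : Fin K) : ENNReal.ofReal (w k) *
      isotropicGaussian (a ^ 2) (√abar • μ k) (Eset d K T w μ abar a C₁ C₂)ᶜ ≤
      ENNReal.ofReal (ε + w k * (K * (2 * ε))) := by
    rcases le_or_gt ε (w k) with hk | hk
    · grw [isotropicGaussian_compl_Eset_le hT hw0 hw1 hab ha1 hC₁ hC₂ hL haL hk,
        ← ENNReal.ofReal_mul (hw0 k).le]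
      exact ENNReal.ofReal_le_ofReal (le_add_of_nonneg_left hε0.le)
    · grw [isotropicGaussian_le_one (by positivity), mul_one]
      exact ENNReal.ofReal_le_ofReal (hk.le.trans (le_add_of_nonneg_right
        (mul_nonneg (hw0 k).le (by positivity))))
  refine (sum_le_sum fun k _ => hterm k).trans ?_
  rw [← ENNReal.ofReal_sum_of_nonneg fun k _ => by have := hw0 k; positivity]
  refine ENNReal.ofReal_le_ofReal (le_of_eq_of_le ?_ (card_mul_exp_neg_four_log_le (K := K) hT))
  rw [sum_add_distrib, ← sum_mul, hw, sum_const, card_univ, Fintype.card_fin, nsmul_eq_mul, ← hε]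
  ring

end TypicalSet

section EntropicSum

open Filter Topology Asymptotics

lemma isLittleO_self_rpow {α : Type*} {l : Filter α} {h : α → ℝ} {θ : ℝ} (hθ : θ < 1)
    (h_pos : ∀ᶠ s in l, 0 < h s) (h_lim : Tendsto h l (𝓝 0)) : h =o[l] fun s => h s ^ θ := by
  have factor : (fun s => h s ^ (1 - θ) * h s ^ θ) =ᶠ[l] h := by
    filter_upwards [h_pos] with s hs
    rw [← Real.rpow_add hs, sub_add_cancel, Real.rpow_one]
  have small : Tendsto (fun s => h s ^ (1 - θ)) l (𝓝 0) := by
    simpa [Real.zero_rpow (sub_pos.2 hθ).ne'] using h_lim.rpow_const (.inr (sub_pos.2 hθ).le)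
  simpa using (((isLittleO_one_iff ℝ).2 small).mul_isBigO (isBigO_refl _ l)).congr' factor .rfl

lemma isLittleO_negMulLog_rpow {θ : ℝ} (hθ0 : 0 < θ) (hθ : θ < 1) :
    negMulLog =o[𝓝[≥] 0] fun x => x ^ θ := by
  rw [← Set.Ioi_insert, isLittleO_insert (by simp)]
  refine ((isBigO_refl (fun x : ℝ => -x) (𝓝[>] 0)).mul_isLittleO
    (isLittleO_log_rpow_nhdsGT_zero (sub_neg.2 hθ))).trans_isBigO (.of_bound 1 ?_)
  filter_upwards [self_mem_nhdsWithin] with x (hx : 0 < x)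
  rw [neg_mul, norm_neg, ← Real.rpow_one_add' hx.le (by linarith), add_sub_cancel, one_mul]

lemma isLittleO_negMulLog_sub {α : Type*} {l : Filter α} {f h : α → ℝ} {x θ : ℝ}
    (hθ0 : 0 < θ) (hθ : θ < 1) (h_pos : ∀ᶠ s in l, 0 < h s) (h_lim : Tendsto h l (𝓝 0))
    (hf : ∀ᶠ s in l, 0 ≤ f s) (hfx : (fun s => f s - x) =O[l] h) :
    (fun s => negMulLog (f s) - negMulLog x) =o[l] fun s => h s ^ θ := by
  have f_lim : Tendsto f l (𝓝 x) := tendsto_sub_nhds_zero_iff.1 (hfx.trans_tendsto h_lim)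
  rcases eq_or_ne x 0 with rfl | hx
  · simp only [sub_zero, negMulLog_zero] at hfx ⊢
    exact ((isLittleO_negMulLog_rpow hθ0 hθ).comp_tendsto
      (tendsto_nhdsWithin_iff.2 ⟨f_lim, hf⟩)).trans_isBigO
        (hfx.rpow hθ0.le (h_pos.mono fun _ => le_of_lt))
  · exact (((differentiableAt_negMulLog_iff.2 hx).isBigO_sub.comp_tendsto f_lim).trans
      hfx).trans_isLittleO (isLittleO_self_rpow hθ h_pos h_lim)

lemma isLittleO_rpow_mul_exp_sub {α : Type*} {l : Filter α} {θ x y : ℝ} {f g h : α → ℝ}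
    (hx : x ≠ 0) (hf : (fun s => f s - x) =o[l] h) (hg : (fun s => g s - y) =o[l] h)
    (h_lim : Tendsto h l (𝓝 0)) :
    (fun s => f s ^ θ * exp (g s) - x ^ θ * exp y) =o[l] h := by
  have joint : (fun s => (f s, g s) - (x, y)) =o[l] h := hf.prod_left hg
  have hφ : DifferentiableAt ℝ (fun z : ℝ × ℝ => z.1 ^ θ * exp z.2) (x, y) :=
    .mul (.rpow_const (by fun_prop) (.inl hx)) (by fun_prop)
  exact (hφ.isBigO_sub.comp_tendsto
    (tendsto_sub_nhds_zero_iff.1 (joint.trans_tendsto h_lim))).trans_isLittleO joint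

variable {ι : Type*} [Fintype ι]

/-- The form which `∑_k π_k e^{-ζ_k}` takes, with `θ = 1 / a`, once the point `x` is expressed
through its vector `p` of posterior weights; the `r k` are then polynomials. -/
noncomputable def entropicSum (θ : ℝ) (r : ι → (ι → ℝ) → ℝ) (p : ι → ℝ) : ℝ :=
  ∑ k, p k ^ θ * exp (r k p - (1 - θ) * ∑ i, negMulLog (p i))

lemma continuous_entropicSum {θ : ℝ} {r : ι → (ι → ℝ) → ℝ} (hθ0 : 0 ≤ θ)
    (hr : ∀ k, Continuous (r k)) : Continuous (entropicSum θ r) := by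
  unfold entropicSum
  refine continuous_finsetSum _ fun k _ => .mul ?_ (by fun_prop)
  exact (continuous_apply k).rpow_const fun _ => .inr hθ0

lemma isLittleO_entropicExponent_sub {α : Type*} {l : Filter α} {θ : ℝ} (hθ0 : 0 < θ) (hθ : θ < 1)
    {ρ : (ι → ℝ) → ℝ} (hρ : Differentiable ℝ ρ) {p : α → ι → ℝ} {q : ι → ℝ} {h : α → ℝ}
    (hp : ∀ s k, 0 ≤ p s k) (h_pos : ∀ s, 0 < h s) (h_lim : Tendsto h l (𝓝 0))
    (hpq : (fun s => p s - q) =O[l] h) :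
    (fun s => (ρ (p s) - (1 - θ) * ∑ i, negMulLog (p s i)) -
      (ρ q - (1 - θ) * ∑ i, negMulLog (q i))) =o[l] fun s => h s ^ θ := by
  have p_lim : Tendsto p l (𝓝 q) := tendsto_sub_nhds_zero_iff.1 (hpq.trans_tendsto h_lim)
  have smooth : (fun s => ρ (p s) - ρ q) =o[l] fun s => h s ^ θ :=
    (((hρ q).isBigO_sub.comp_tendsto p_lim).trans hpq).trans_isLittleO
      (isLittleO_self_rpow hθ (.of_forall h_pos) h_lim)
  have entropy : (fun s => ∑ i, (negMulLog (p s i) - negMulLog (q i))) =o[l] fun s => h s ^ θ :=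
    .fun_sum fun i _ => isLittleO_negMulLog_sub hθ0 hθ (.of_forall h_pos) h_lim
      (.of_forall fun s => hp s i) (isBigO_pi.1 hpq i)
  refine (smooth.sub (entropy.const_mul_left (1 - θ))).congr_left fun s => ?_
  rw [sum_sub_distrib]
  ring

/-- Mass moved to an empty class `k₀` contributes `p_{k₀}^θ` to the sum, whereas the change of all
other terms is of order `p_{k₀} log (1 / p_{k₀})`. -/
lemma eventually_entropicSum_lt {α : Type*} {l : Filter α} {θ : ℝ} (hθ0 : 0 < θ) (hθ : θ < 1)
    {r : ι → (ι → ℝ) → ℝ} (hr : ∀ k, Differentiable ℝ (r k)) {p : α → ι → ℝ} {q : ι → ℝ} {k₀ : ι}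
    (hp : ∀ s k, 0 < p s k) (hq : q k₀ = 0)
    (h_lim : Tendsto (fun s => p s k₀) l (𝓝 0)) (hpq : (fun s => p s - q) =O[l] fun s => p s k₀) :
    ∀ᶠ s in l, entropicSum θ r q < entropicSum θ r (p s) := by
  classical
  let γ (k : ι) (p : ι → ℝ) : ℝ := r k p - (1 - θ) * ∑ i, negMulLog (p i)
  let term (p : ι → ℝ) (k : ι) : ℝ := p k ^ θ * exp (γ k p)
  have hγ (k : ι) : (fun s => γ k (p s) - γ k q) =o[l] fun s => p s k₀ ^ θ :=
    isLittleO_entropicExponent_sub hθ0 hθ (hr k) (fun s k => (hp s k).le) (fun s => hp s k₀)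
      h_lim hpq
  have scale_lim : Tendsto (fun s => p s k₀ ^ θ) l (𝓝 0) := by
    simpa [Real.zero_rpow hθ0.ne'] using h_lim.rpow_const (.inr hθ0.le)
  have charged (k : ι) (hk : q k ≠ 0) :
      (fun s => term (p s) k - term q k) =o[l] fun s => p s k₀ ^ θ :=
    isLittleO_rpow_mul_exp_sub hk ((isBigO_pi.1 hpq k).trans_isLittleO
      (isLittleO_self_rpow hθ (.of_forall (hp · k₀)) h_lim)) (hγ k) scale_lim
  have gain : ∀ᶠ s in l, exp (γ k₀ q - 1) ≤ exp (γ k₀ (p s)) := by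
    filter_upwards [((hγ k₀).trans_tendsto scale_lim).eventually_const_lt neg_one_lt_zero] with s hs
    exact exp_le_exp.2 (by linarith)
  have loss : ∀ᶠ s in l, |∑ k with q k ≠ 0, (term (p s) k - term q k)| ≤
      exp (γ k₀ q - 1) / 2 * |p s k₀ ^ θ| :=
    (IsLittleO.fun_sum fun k hk => charged k (mem_filter.1 hk).2).def (half_pos (exp_pos _))
  filter_upwards [gain, loss] with s hgain hloss
  have hpos : 0 < p s k₀ ^ θ := rpow_pos_of_pos (hp s k₀) θ
  have uncharged : p s k₀ ^ θ * exp (γ k₀ q - 1) ≤ ∑ k with ¬q k ≠ 0, term (p s) k :=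
    (mul_le_mul_of_nonneg_left hgain hpos.le).trans (single_le_sum (f := term (p s))
      (fun k _ => mul_nonneg (rpow_nonneg (hp s k).le θ) (exp_pos _).le) (by simp [hq]))
  have void : ∑ k with ¬q k ≠ 0, term q k = 0 := sum_eq_zero fun k hk => by
    simp [term, not_not.1 (mem_filter.1 hk).2, Real.zero_rpow hθ0.ne']
  rw [abs_of_pos hpos] at hloss
  rw [sum_sub_distrib] at hloss
  change ∑ k, term q k < ∑ k, term (p s) k
  rw [← sum_filter_add_sum_filter_not univ (fun k => q k ≠ 0) (term q), void,
    ← sum_filter_add_sum_filter_not univ (fun k => q k ≠ 0) (term (p s))]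
  linarith [neg_abs_le (∑ k with q k ≠ 0, term (p s) k - ∑ k with q k ≠ 0, term q k),
    mul_pos hpos (exp_pos (γ k₀ q - 1))]

end EntropicSum

section Recession

open Filter Topology

lemma exists_recession_direction {ι V : Type*} [Finite ι] [NormedAddCommGroup V]
    [NormedSpace ℝ V] [FiniteDimensional ℝ V] {f : ι → V →ₗ[ℝ] ℝ} {J : Set ι} {L : ι → ℝ}
    {u : ℕ → V} (hu : Tendsto (fun n => ‖u n‖) atTop atTop)
    (hJ : ∀ i ∈ J, Tendsto (fun n => f i (u n)) atTop (𝓝 (L i)))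
    (hJc : ∀ i ∉ J, Tendsto (fun n => f i (u n)) atTop atBot) :
    ∃ b v, v ≠ 0 ∧ (∀ i ∈ J, f i b = L i) ∧ (∀ i ∈ J, f i v = 0) ∧ ∀ i ∉ J, f i v < 0 := by
  let F : V →ₗ[ℝ] J → ℝ := LinearMap.pi fun i => f i
  obtain ⟨R, hR⟩ := F.rangeRestrict.exists_rightInverse_of_surjective F.range_rangeRestrict
  have F_R (y : F.range) : F (R y) = y := congr_arg Subtype.val (LinearMap.congr_fun hR y)
  have F_lim : Tendsto (fun n => F (u n)) atTop (𝓝 fun i => L i) :=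
    tendsto_pi_nhds.2 fun i => hJ i i.2
  have L_mem : (fun i : J => L i) ∈ F.range :=
    F.range.closed_of_finiteDimensional.mem_of_tendsto F_lim (.of_forall fun n => ⟨u n, rfl⟩)
  let g (n : ℕ) : V := R (F.rangeRestrict (u n))
  have g_lim : Tendsto g atTop (𝓝 (R ⟨_, L_mem⟩)) :=
    (R.continuous_of_finiteDimensional.tendsto _).comp (tendsto_subtype_rng.2 F_lim)
  have norm_lim : Tendsto (fun n => ‖u n - g n‖) atTop atTop :=
    tendsto_atTop_mono (fun n => norm_sub_norm_le _ _)
      (hu.atTop_add g_lim.norm.neg |>.congr fun n => (sub_eq_add_neg _ _).symm)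
  have neg (i : ι) (hi : i ∉ J) : ∀ᶠ n in atTop, f i (u n - g n) < 0 := by
    have f_lim := (((f i).continuous_of_finiteDimensional.tendsto _).comp g_lim).neg
    filter_upwards [((hJc i hi).atBot_add f_lim).eventually_lt_atBot 0] with n hn
    simpa [sub_eq_add_neg] using hn
  obtain ⟨n, hn0, hn⟩ := ((norm_lim.eventually_gt_atTop 0).and
    (eventually_all.2 fun i => eventually_imp_distrib_left.2 (neg i))).exists
  refine ⟨R ⟨_, L_mem⟩, u n - g n, norm_pos_iff.1 hn0, fun i hi => congr_fun (F_R _) ⟨i, hi⟩,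
    fun i hi => ?_, hn⟩
  have : F (g n) = F (u n) := F_R _
  simpa [F, sub_eq_zero] using (congr_fun this ⟨i, hi⟩).symm

end Recession

section SoftmaxRay

open Filter Topology Asymptotics

variable {ι V α : Type*} [Fintype ι]

lemma isBigO_softmax_sub {l : Filter α} {z : α → ι → ℝ} {q : ι → ℝ} {h : α → ℝ}
    (hq : ∑ i, q i = 1) (hz : (fun s => (fun i => exp (z s i)) - q) =O[l] h)
    (h_lim : Tendsto h l (𝓝 0)) : (fun s => softmax (z s) - q) =O[l] h := by
  refine isBigO_pi.2 fun k => ?_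
  have hφ : DifferentiableAt ℝ (fun E : ι → ℝ => E k * (∑ i, E i)⁻¹) q :=
    .mul (by fun_prop) (.inv (by fun_prop) (hq ▸ one_ne_zero))
  refine ((hφ.isBigO_sub.comp_tendsto
    (tendsto_sub_nhds_zero_iff.1 (hz.trans_tendsto h_lim))).trans hz).congr_left fun s => ?_
  simp [softmax, hq, div_eq_mul_inv]

lemma isBigO_exp_softmax {l : Filter α} {z : α → ι → ℝ} {q : ι → ℝ}
    (hz : Tendsto (fun s i => exp (z s i)) l (𝓝 q)) (k : ι) :
    (fun s => exp (z s k)) =O[l] fun s => softmax (z s) k := by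
  have : Nonempty ι := ⟨k⟩
  have total : (fun s => ∑ i, exp (z s i)) =O[l] fun _ => (1 : ℝ) :=
    (tendsto_finsetSum univ fun i _ => tendsto_pi_nhds.1 hz i).isBigO_one ℝ
  refine ((isBigO_refl (fun s => softmax (z s) k) l).mul total).congr (fun s => ?_)
    fun s => mul_one _
  exact div_mul_cancel₀ _ (sum_pos (fun i _ => exp_pos _) univ_nonempty).ne'

lemma tendsto_exp_sub_of_softmax [Nonempty ι] {l : Filter α} {z : α → ι → ℝ} {q : ι → ℝ} {k : ι}
    (hz : Tendsto (fun s => softmax (z s)) l (𝓝 q)) (hk : q k ≠ 0) (i : ι) :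
    Tendsto (fun s => exp (z s i - z s k)) l (𝓝 (q i / q k)) := by
  refine ((tendsto_pi_nhds.1 hz i).div (tendsto_pi_nhds.1 hz k) hk).congr fun s => ?_
  exact (eq_div_of_mul_eq (softmax_pos _ k).ne' (mul_comm (softmax (z s) k) _ ▸
    (softmax_eq_mul_exp_sub (z s) i k).symm)).symm

variable [NormedAddCommGroup V] [NormedSpace ℝ V] {c : ι → ℝ} {f : ι → V →L[ℝ] ℝ} {q : ι → ℝ}

lemma exists_ray_of_tendsto_softmax [FiniteDimensional ℝ V] {u : ℕ → V}
    (hu : Tendsto (fun n => ‖u n‖) atTop atTop) (hq : q ∈ stdSimplex ℝ ι)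
    (hp : Tendsto (fun n => softmax fun i => c i + f i (u n)) atTop (𝓝 q)) :
    ∃ b v σ τ, v ≠ 0 ∧ (∀ i, q i ≠ 0 → c i + f i b = log (q i) + σ) ∧
      (∀ i, q i ≠ 0 → f i v = τ) ∧ ∀ i, q i = 0 → f i v < τ := by
  obtain ⟨k, -, hk⟩ : ∃ k ∈ univ, q k ≠ 0 := exists_ne_zero_of_sum_ne_zero (by simp [hq.2])
  have : Nonempty ι := ⟨k⟩
  have ratio (i : ι) : Tendsto (fun n => exp (c i - c k + (f i - f k) (u n))) atTop
      (𝓝 (q i / q k)) :=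
    (tendsto_exp_sub_of_softmax hp hk i).congr fun n => by simp [add_sub_add_comm]
  obtain ⟨b, v, hv, hb, hv0, hv1⟩ := exists_recession_direction
    (f := fun i => (f i - f k : V →L[ℝ] ℝ).toLinearMap) (J := {i | q i ≠ 0})
    (L := fun i => log (q i / q k) - (c i - c k)) hu
    (fun i hi => (((ratio i).log (div_ne_zero hi hk)).sub_const (c i - c k)).congr fun n => by simp)
    (fun i hi => by
      have limit := ratio i
      rw [not_not.1 hi, zero_div, tendsto_exp_comp_nhds_zero] at limit
      exact (tendsto_atBot_add_const_left _ (-(c i - c k)) limit).congr fun n => by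
        simp only [ContinuousLinearMap.coe_coe]
        ring)
  simp only [ContinuousLinearMap.coe_coe, _root_.sub_apply, Set.mem_ofPred_eq,
    not_not, sub_eq_zero, sub_neg] at hb hv0 hv1
  refine ⟨b, v, c k + f k b - log (q k), f k v, hv, fun i hi => ?_, hv0, hv1⟩
  linarith [hb i hi, Real.log_div hi hk]

lemma isBigO_exp_along_ray {l : Filter α} {b v : V} {σ τ κ : ℝ} {s : α → ℝ} {y : α → V}
    (hq : ∀ i, 0 ≤ q i)
    (hb : ∀ i, q i ≠ 0 → c i + f i b = log (q i) + σ) (hv : ∀ i, q i ≠ 0 → f i v = τ)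
    (hv' : ∀ i, q i = 0 → f i v ≤ τ - κ) (hκ : 0 < κ) (hs : Tendsto s l atTop)
    (hy : y =O[l] fun x => exp (-(κ * s x))) :
    (fun x => (fun i => exp (c i + f i (b + s x • v + y x) - (σ + s x * τ))) - q) =O[l]
      fun x => exp (-(κ * s x)) := by
  have decay : Tendsto (fun x => exp (-(κ * s x))) l (𝓝 0) :=
    tendsto_exp_neg_atTop_nhds_zero.comp (hs.const_mul_atTop hκ)
  refine isBigO_pi.2 fun i => ?_
  have fy : (fun x => f i (y x)) =O[l] fun x => exp (-(κ * s x)) :=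
    ((f i).isBigO_comp y l).trans hy
  rcases eq_or_ne (q i) 0 with hi | hi
  · simp only [Pi.sub_apply, hi, sub_zero]
    refine isBigO_exp_comp_exp_comp.2 ?_
    refine isBoundedUnder_of_eventually_le (a := c i + f i b - σ + 1) ?_
    filter_upwards [(fy.trans_tendsto decay).eventually_le_const one_pos,
      hs.eventually_ge_atTop 0] with x hx hs0
    simp only [map_add, map_smul, smul_eq_mul, Pi.sub_apply]
    nlinarith [hv' i hi]
  · have shift (x : α) : c i + f i (b + s x • v + y x) - (σ + s x * τ) =
        log (q i) + f i (y x) := by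
      simp only [map_add, map_smul, smul_eq_mul, hv i hi]
      linarith [hb i hi]
    have arg_lim : Tendsto (fun x => log (q i) + f i (y x)) l (𝓝 (log (q i))) := by
      simpa using (fy.trans_tendsto decay).const_add (log (q i))
    simp only [Pi.sub_apply, shift]
    refine ((differentiableAt_exp.isBigO_sub.comp_tendsto arg_lim).congr
      (fun x => by simp [exp_log ((hq i).lt_of_ne' hi)]) fun x => ?_).trans fy
    simp

lemma eventually_entropicSum_lt_along_ray {l : Filter α} {b v : V} {σ τ : ℝ} {s : α → ℝ}
    {y : α → V} {θ : ℝ} {r : ι → (ι → ℝ) → ℝ} {k₀ : ι} (hθ0 : 0 < θ) (hθ : θ < 1)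
    (hr : ∀ k, Differentiable ℝ (r k)) (hq : q ∈ stdSimplex ℝ ι)
    (hb : ∀ i, q i ≠ 0 → c i + f i b = log (q i) + σ) (hv : ∀ i, q i ≠ 0 → f i v = τ)
    (hv' : ∀ i, q i = 0 → f i v ≤ f k₀ v) (hk₀ : q k₀ = 0) (hτ : f k₀ v < τ)
    (hs : Tendsto s l atTop) (hy : y =O[l] fun x => exp (-((τ - f k₀ v) * s x))) :
    ∀ᶠ x in l, entropicSum θ r q <
      entropicSum θ r (softmax fun i => c i + f i (b + s x • v + y x)) := by
  have decay : Tendsto (fun x => exp (-((τ - f k₀ v) * s x))) l (𝓝 0) :=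
    tendsto_exp_neg_atTop_nhds_zero.comp (hs.const_mul_atTop (sub_pos.2 hτ))
  let z (x : α) (i : ι) : ℝ := c i + f i (b + s x • v + y x) - (σ + s x * τ)
  have softmax_z (x : α) : (softmax fun i => c i + f i (b + s x • v + y x)) = softmax (z x) :=
    (softmax_add_const _ (-(σ + s x * τ))).symm
  have hz : (fun x => (fun i => exp (z x i)) - q) =O[l] fun x => exp (-((τ - f k₀ v) * s x)) :=
    isBigO_exp_along_ray hq.1 hb hv (fun i hi => (hv' i hi).trans (by linarith)) (sub_pos.2 hτ)
      hs hy
  have fy : Tendsto (fun x => f k₀ (y x)) l (𝓝 0) :=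
    (((f k₀).isBigO_comp y l).trans hy).trans_tendsto decay
  have scale : (fun x => exp (-((τ - f k₀ v) * s x))) =O[l] fun x => softmax (z x) k₀ := by
    refine .trans (isBigO_exp_comp_exp_comp.2 ?_)
      (isBigO_exp_softmax (tendsto_sub_nhds_zero_iff.1 (hz.trans_tendsto decay)) k₀)
    refine isBoundedUnder_of_eventually_le (a := σ - c k₀ - f k₀ b + 1) ?_
    filter_upwards [fy.eventually_const_le neg_one_lt_zero] with x hx
    simp only [z, map_add, map_smul, smul_eq_mul, Pi.sub_apply]
    linarith
  have p_sub : (fun x => softmax (z x) - q) =O[l] _ := isBigO_softmax_sub hq.2 hz decay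
  have p_lim : Tendsto (fun x => softmax (z x) k₀) l (𝓝 0) := by
    simpa [hk₀] using (isBigO_pi.1 p_sub k₀).trans_tendsto decay
  have : Nonempty ι := ⟨k₀⟩
  simp only [softmax_z]
  exact eventually_entropicSum_lt hθ0 hθ hr (fun x => softmax_pos (z x)) hk₀ p_lim
    (p_sub.trans scale)

lemma exists_unbounded_seq_tendsto_softmax [Nonempty ι] {S : Set V} (hS : ¬Bornology.IsBounded S) :
    ∃ u : ℕ → V, ∃ q ∈ stdSimplex ℝ ι, (∀ n, u n ∈ S) ∧ Tendsto (fun n => ‖u n‖) atTop atTop ∧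
      Tendsto (fun n => softmax fun i => c i + f i (u n)) atTop (𝓝 q) := by
  rw [isBounded_iff_forall_norm_le] at hS
  push Not at hS
  choose u hu_mem hu using fun n : ℕ => hS n
  obtain ⟨q, hq, φ, hφ, hlim⟩ := (isCompact_stdSimplex ℝ ι).tendsto_subseq
    (x := fun n => softmax fun i => c i + f i (u n))
    fun n => ⟨fun k => (softmax_pos _ k).le, sum_softmax _⟩
  exact ⟨u ∘ φ, q, hq, fun n => hu_mem _, (tendsto_atTop_mono (fun n => (hu n).le)
    tendsto_natCast_atTop_atTop).comp hφ.tendsto_atTop, hlim⟩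

lemma eventually_ball_subset_of_forall_mem {S : Set V} {b v : V} {κ : ℝ}
    (h : ∀ {l : Filter (ℝ × V)}, Tendsto Prod.fst l atTop →
      Prod.snd =O[l] (fun x => exp (-(κ * x.1))) → ∀ᶠ x in l, b + x.1 • v + x.2 ∈ S) :
    ∀ᶠ s in atTop, Metric.ball (b + s • v) (exp (-(κ * s))) ⊆ S := by
  have near := h (l := comap Prod.fst atTop ⊓ 𝓟 {x | ‖x.2‖ ≤ exp (-(κ * x.1))})
    (tendsto_comap.mono_left inf_le_left)
    (.of_bound 1 (eventually_inf_principal.2 (.of_forall fun x hx => by simpa using hx)))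
  rw [eventually_inf_principal, eventually_comap] at near
  filter_upwards [near] with s hs u hu
  simpa using hs (s, u - (b + s • v)) rfl (mem_ball_iff_norm.1 hu).le

lemma eventually_ball_subset_of_isOpen {S : Set V} {b v : V} {κ : ℝ} (hS : IsOpen S) (hb : b ∈ S)
    (hv : ∀ u ∈ S, ∀ s : ℝ, u + s • v ∈ S) (hκ : 0 < κ) :
    ∀ᶠ s in atTop, Metric.ball (b + s • v) (exp (-(κ * s))) ⊆ S := by
  obtain ⟨ε, hε, hball⟩ := Metric.isOpen_iff.1 hS b hb
  filter_upwards [(tendsto_exp_neg_atTop_nhds_zero.comp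
    (tendsto_id.const_mul_atTop hκ)).eventually_le_const hε] with s hs u hu
  have near : ‖u - s • v - b‖ < ε :=
    (sub_add_eq_sub_sub_swap u b (s • v) ▸ mem_ball_iff_norm.1 hu).trans_le hs
  simpa using hv _ (hball (mem_ball_iff_norm.2 near)) s

/-- The set may get thin at infinity, but only exponentially thin: a limit of the posterior weights
along an unbounded sequence lies on a face of the simplex, and moving mass off that face increases
the sum. -/
lemma exists_ray_eventually_ball_subset [FiniteDimensional ℝ V] [Nonempty ι] {θ θ₀ : ℝ}
    {r : ι → (ι → ℝ) → ℝ} (hθ0 : 0 < θ) (hθ : θ < 1) (hr : ∀ k, Differentiable ℝ (r k))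
    (hS : ¬Bornology.IsBounded {u | θ₀ < entropicSum θ r (softmax fun i => c i + f i u)}) :
    ∃ b v κ, v ≠ 0 ∧ 0 < κ ∧ ∀ᶠ s in atTop, Metric.ball (b + s • v) (exp (-(κ * s))) ⊆
      {u | θ₀ < entropicSum θ r (softmax fun i => c i + f i u)} := by
  have Φ_cont : Continuous (entropicSum θ r) :=
    continuous_entropicSum hθ0.le fun k => (hr k).continuous
  obtain ⟨u, q, hq, hu_mem, hu, hlim⟩ := exists_unbounded_seq_tendsto_softmax (c := c) (f := f) hS
  have hθ₀ : θ₀ ≤ entropicSum θ r q :=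
    ge_of_tendsto ((Φ_cont.tendsto q).comp hlim) (.of_forall fun n => (hu_mem n).le)
  obtain ⟨b, v, σ, τ, hv, hb, hv0, hv1⟩ := exists_ray_of_tendsto_softmax hu hq hlim
  rcases (univ.filter fun i => q i = 0).eq_empty_or_nonempty with hempty | hne
  · have hinv (x : V) (s : ℝ) : (softmax fun i => c i + f i (x + s • v)) =
        softmax fun i => c i + f i x := by
      rw [← softmax_add_const (fun i => c i + f i x) (s * τ)]
      congr 1 with i
      rw [map_add, map_smul, hv0 i (filter_eq_empty_iff.1 hempty (mem_univ i)), smul_eq_mul,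
        add_assoc]
    refine ⟨u 0, v, 1, hv, one_pos,
      eventually_ball_subset_of_isOpen ?_ (hu_mem 0) (fun x hx s => ?_) one_pos⟩
    · exact isOpen_lt continuous_const (Φ_cont.comp
        (continuous_softmax.comp (by fun_prop)))
    · rwa [Set.mem_ofPred_eq, hinv]
  · obtain ⟨k₀, hk₀, hmax⟩ := exists_max_image _ (fun i => f i v) hne
    simp only [mem_filter, mem_univ, true_and] at hk₀ hmax
    refine ⟨b, v, τ - f k₀ v, hv, sub_pos.2 (hv1 k₀ hk₀),
      eventually_ball_subset_of_forall_mem fun hs hy => ?_⟩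
    filter_upwards [eventually_entropicSum_lt_along_ray hθ0 hθ hr hq hb hv0 hmax hk₀ (hv1 k₀ hk₀)
      hs hy] with x hx
    exact hθ₀.trans_lt hx

end SoftmaxRay

section Divergence

open Filter Topology

variable {V : Type*} [NormedAddCommGroup V]

lemma not_integrable_of_const_le [NormedSpace ℝ V] [FiniteDimensional ℝ V] [Nontrivial V]
    [MeasurableSpace V] [BorelSpace V] {ν : Measure V} [ν.IsAddHaarMeasure] {F : V → ℝ} {c : ℝ}
    (hc : 0 < c) (h : ∀ x, c ≤ F x) : ¬Integrable F ν := fun hF => by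
  have : NoncompactSpace V := NormedSpace.noncompactSpace ℝ V
  have hconst : Integrable (fun _ : V => c) ν :=
    hF.mono' aestronglyMeasurable_const (.of_forall fun x =>
      (Real.norm_of_nonneg hc.le).trans_le (h x))
  have : IsFiniteMeasure ν := (integrable_const_iff.1 hconst).resolve_left hc.ne'
  exact measure_ne_top ν _ (measure_univ_of_isAddLeftInvariant ν)

lemma measureReal_ball_exp [NormedSpace ℝ V] [FiniteDimensional ℝ V] [MeasurableSpace V]
    [BorelSpace V] (ν : Measure V) [ν.IsAddHaarMeasure] (x : V) (t : ℝ) :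
    ν.real (Metric.ball x (exp t)) = exp (Module.finrank ℝ V * t) * ν.real (Metric.ball 0 1) := by
  rw [Measure.real, Measure.addHaar_ball_of_pos ν x (exp_pos t), ENNReal.toReal_mul,
    ENNReal.toReal_ofReal (by positivity), ← Real.exp_nat_mul, Measure.real]

lemma sub_le_norm_of_mem_ball {a u : V} {ε : ℝ} (hu : u ∈ Metric.ball a ε) : ‖a‖ - ε ≤ ‖u‖ := by
  linarith [norm_sub_norm_le a u, mem_ball_iff_norm'.1 hu]

lemma not_integrableOn_of_eventually_ball_subset [NormedSpace ℝ V] [FiniteDimensional ℝ V]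
    [MeasurableSpace V] [BorelSpace V] {ν : Measure V} [ν.IsAddHaarMeasure] {g : V → ℝ} {S : Set V}
    {b v : V} {κ : ℝ} (hv : v ≠ 0) (hκ : 0 < κ)
    (hball : ∀ᶠ s in atTop, Metric.ball (b + s • v) (exp (-(κ * s))) ⊆ S) (hg0 : ∀ u, 0 ≤ g u)
    (hg : ∀ Λ, ∀ᶠ u in Bornology.cobounded V, exp (Λ * ‖u‖) ≤ g u) : ¬IntegrableOn g S ν := by
  intro hint
  have hv0 : 0 < ‖v‖ := norm_pos_iff.2 hv
  set n : ℝ := (Module.finrank ℝ V : ℝ)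
  set Λ := (n * κ + 1) / ‖v‖
  have hΛ : Λ * ‖v‖ = n * κ + 1 := div_mul_cancel₀ _ hv0.ne'
  have hΛ0 : 0 ≤ Λ := by positivity
  obtain ⟨R, -, hR⟩ := hasBasis_cobounded_norm.eventually_iff.1 (hg Λ)
  set B := exp (-(Λ * (‖b‖ + 1))) * ν.real (Metric.ball 0 1)
  have hB : 0 < B := mul_pos (exp_pos _)
    (ENNReal.toReal_pos (Metric.measure_ball_pos ν 0 one_pos).ne' measure_ball_lt_top.ne)
  have lower : ∀ᶠ s in atTop, B * exp s ≤ ∫ u in S, g u ∂ν := by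
    filter_upwards [hball, eventually_ge_atTop 0,
      (tendsto_id.atTop_mul_const hv0).eventually_ge_atTop (R + ‖b‖ + 1)] with s hsub hs0 hsR
    have norm_ge (u : V) (hu : u ∈ Metric.ball (b + s • v) (exp (-(κ * s)))) :
        s * ‖v‖ - (‖b‖ + 1) ≤ ‖u‖ := by
      have radius : exp (-(κ * s)) ≤ 1 := exp_le_one_iff.2 (neg_nonpos.2 (by positivity))
      have centre : s * ‖v‖ ≤ ‖b + s • v‖ + ‖b‖ := by
        simpa [norm_smul, abs_of_nonneg hs0] using norm_sub_le (b + s • v) b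
      linarith [sub_le_norm_of_mem_ball hu]
    calc B * exp s
        = exp (Λ * (s * ‖v‖ - (‖b‖ + 1))) *
            ν.real (Metric.ball (b + s • v) (exp (-(κ * s)))) := by
          rw [measureReal_ball_exp, mul_left_comm, ← mul_assoc, ← Real.exp_add, mul_right_comm,
            ← Real.exp_add]
          congr 2
          linear_combination -s * hΛ
      _ ≤ ∫ u in Metric.ball (b + s • v) (exp (-(κ * s))), g u ∂ν := by
          refine setIntegral_ge_of_const_le_real measurableSet_ball measure_ball_lt_top.ne
            (fun u hu => (exp_le_exp.2 ?_).trans (hR (le_trans ?_ (norm_ge u hu))))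
            (hint.mono_set hsub)
          · exact mul_le_mul_of_nonneg_left (norm_ge u hu) hΛ0
          · linarith [show R + ‖b‖ + 1 ≤ s * ‖v‖ from hsR]
      _ ≤ ∫ u in S, g u ∂ν := setIntegral_mono_set hint (.of_forall hg0) hsub.eventuallyLE
  obtain ⟨s, hs, hlt⟩ := (lower.and ((tendsto_exp_atTop.const_mul_atTop hB).eventually_gt_atTop
    (∫ u in S, g u ∂ν))).exists
  exact hlt.not_ge hs

variable [InnerProductSpace ℝ V] {ι : Type*} [Fintype ι] {w : ι → ℝ} {m : ι → V} {a : ℝ}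

lemma le_smoothing_exponent (ha : 1 < a) (x u c : V) :
    1 / (2 * a ^ 2 * (a - 1)) * ‖u‖ ^ 2 -
        (‖√a • x‖ / (a * (a - 1)) + ‖c‖ / a ^ 2) * ‖u‖ - ‖c‖ ^ 2 / (2 * a ^ 2) ≤
      -‖√a • x - u‖ ^ 2 / (2 * a * (1 - a)) + -‖u - c‖ ^ 2 / (2 * a ^ 2) := by
  have h1a : 0 < a - 1 := sub_pos.2 ha
  have : 0 < a := one_pos.trans ha
  have growth : (‖u‖ ^ 2 - 2 * ‖√a • x‖ * ‖u‖) / (2 * a * (a - 1)) ≤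
      ‖√a • x - u‖ ^ 2 / (2 * a * (a - 1)) := by
    gcongr
    rw [norm_sub_sq_real]
    nlinarith [real_inner_le_norm (√a • x) u, sq_nonneg ‖√a • x‖]
  have decay : ‖u - c‖ ^ 2 / (2 * a ^ 2) ≤
      (‖u‖ ^ 2 + 2 * ‖u‖ * ‖c‖ + ‖c‖ ^ 2) / (2 * a ^ 2) := by
    gcongr
    rw [norm_sub_sq_real]
    nlinarith [neg_le_of_abs_le (abs_real_inner_le_norm u c)]
  have flip : -‖√a • x - u‖ ^ 2 / (2 * a * (1 - a)) = ‖√a • x - u‖ ^ 2 / (2 * a * (a - 1)) := by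
    rw [← neg_sub a 1, mul_neg, neg_div_neg_eq]
  have split : 1 / (2 * a ^ 2 * (a - 1)) * ‖u‖ ^ 2 -
        (‖√a • x‖ / (a * (a - 1)) + ‖c‖ / a ^ 2) * ‖u‖ - ‖c‖ ^ 2 / (2 * a ^ 2) =
      (‖u‖ ^ 2 - 2 * ‖√a • x‖ * ‖u‖) / (2 * a * (a - 1)) -
        (‖u‖ ^ 2 + 2 * ‖u‖ * ‖c‖ + ‖c‖ ^ 2) / (2 * a ^ 2) := by
    field_simp
    ring
  rw [split, flip, neg_div]
  linarith

lemma eventually_exp_mul_norm_le_smoothing [Nonempty ι] (ha : 1 < a) (hw : ∀ k, 0 < w k) (x : V)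
    (Λ : ℝ) : ∀ᶠ u in Bornology.cobounded V, exp (Λ * ‖u‖) ≤
      exp (-‖√a • x - u‖ ^ 2 / (2 * a * (1 - a))) *
        ∑ k, w k * exp (-‖u - m k‖ ^ 2 / (2 * a ^ 2)) := by
  obtain ⟨k⟩ := ‹Nonempty ι›
  have hε : 0 < 1 / (2 * a ^ 2 * (a - 1)) := by
    have := sub_pos.2 ha
    positivity
  set B := ‖√a • x‖ / (a * (a - 1)) + ‖m k‖ / a ^ 2
  have quadratic : Tendsto (fun u : V => (1 / (2 * a ^ 2 * (a - 1)) * ‖u‖ + (-B - Λ)) * ‖u‖)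
      (Bornology.cobounded V) atTop :=
    (tendsto_atTop_add_const_right _ _ (tendsto_norm_cobounded_atTop.const_mul_atTop
      hε)).atTop_mul_atTop₀ tendsto_norm_cobounded_atTop
  filter_upwards [quadratic.eventually_ge_atTop (‖m k‖ ^ 2 / (2 * a ^ 2) - log (w k))] with u hu
  calc exp (Λ * ‖u‖)
      ≤ exp (-‖√a • x - u‖ ^ 2 / (2 * a * (1 - a)) +
          (log (w k) + -‖u - m k‖ ^ 2 / (2 * a ^ 2))) :=
        exp_le_exp.2 (by linarith [le_smoothing_exponent ha x u (m k)])
    _ = exp (-‖√a • x - u‖ ^ 2 / (2 * a * (1 - a))) *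
          (w k * exp (-‖u - m k‖ ^ 2 / (2 * a ^ 2))) := by
        rw [Real.exp_add, Real.exp_add, exp_log (hw k)]
    _ ≤ _ := by
        gcongr
        exact single_le_sum (f := fun k => w k * exp (-‖u - m k‖ ^ 2 / (2 * a ^ 2)))
          (fun i _ => mul_nonneg (hw i).le (exp_pos _).le) (mem_univ k)

end Divergence

section VanishingMass

variable {V ι : Type*} [NormedAddCommGroup V] [InnerProductSpace ℝ V] [FiniteDimensional ℝ V]
  [MeasurableSpace V] [BorelSpace V] [Fintype ι] {w : ι → ℝ} {m : ι → V} {a : ℝ} {S : Set V}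

lemma smoothedMass_eq_zero_of_nonpos [Nontrivial V] (ha : a ≤ 0) : smoothedMass w m a S = 0 := by
  have : NoncompactSpace V := NormedSpace.noncompactSpace ℝ V
  simp [smoothedMass, sqrt_eq_zero_of_nonpos ha, Measure.real]

lemma smoothedMass_one_eq_zero [Nontrivial V] : smoothedMass w m 1 S = 0 := by
  have : NoncompactSpace V := NormedSpace.noncompactSpace ℝ V
  simp [smoothedMass, Measure.real]

lemma smoothedMass_eq_zero_of_isBounded [Nontrivial V] [Nonempty ι] (ha : 1 < a)
    (hw : ∀ k, 0 < w k) (hS : IsOpen S) (hS' : Bornology.IsBounded S) :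
    smoothedMass w m a S = 0 := by
  rcases S.eq_empty_or_nonempty with rfl | hne
  · simp [smoothedMass]
  have hint (g : V → ℝ) (hg : Continuous g) : IntegrableOn g S :=
    (hg.continuousOn.integrableOn_compact hS'.isCompact_closure).mono_set subset_closure
  set ψ : V → ℝ := fun u => ∑ k, w k * exp (-‖u - m k‖ ^ 2 / (2 * a ^ 2))
  have ψ_pos (u : V) : 0 < ψ u :=
    sum_pos (fun k _ => mul_pos (hw k) (exp_pos _)) univ_nonempty
  have ψ_cont : Continuous ψ := by fun_prop
  have mass_pos : 0 < ∫ u in S, ψ u := by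
    rw [setIntegral_pos_iff_support_of_nonneg_ae (.of_forall fun u => (ψ_pos u).le) (hint ψ ψ_cont),
      Function.support_eq_univ fun u => (ψ_pos u).ne', Set.univ_inter]
    exact hS.measure_pos _ hne
  refine integral_undef (not_integrable_of_const_le mass_pos fun x =>
    integral_mono (hint ψ ψ_cont) (hint _ (by fun_prop)) fun u => ?_)
  refine le_mul_of_one_le_left (ψ_pos u).le (one_le_exp (div_nonneg_of_nonpos ?_ ?_))
  · exact neg_nonpos.2 (sq_nonneg _)
  · nlinarith

lemma smoothedMass_eq_zero_of_softmax [Nontrivial V] [Nonempty ι] (ha : 1 < a) (hw : ∀ k, 0 < w k)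
    {c : ι → ℝ} {f : ι → V →L[ℝ] ℝ} {θ θ₀ : ℝ} {r : ι → (ι → ℝ) → ℝ} (hθ0 : 0 < θ) (hθ : θ < 1)
    (hr : ∀ k, Differentiable ℝ (r k)) :
    smoothedMass w m a {u | θ₀ < entropicSum θ r (softmax fun i => c i + f i u)} = 0 := by
  by_cases hS : Bornology.IsBounded {u | θ₀ < entropicSum θ r (softmax fun i => c i + f i u)}
  · refine smoothedMass_eq_zero_of_isBounded ha hw (isOpen_lt continuous_const ?_) hS
    exact (continuous_entropicSum hθ0.le fun k => (hr k).continuous).comp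
      (continuous_softmax.comp (by fun_prop))
  · obtain ⟨b, v, κ, hv, hκ, hball⟩ := exists_ray_eventually_ball_subset hθ0 hθ hr hS
    refine (integral_congr_ae (.of_forall fun x => integral_undef ?_)).trans (integral_zero V ℝ)
    exact not_integrableOn_of_eventually_ball_subset hv hκ hball
      (fun u => mul_nonneg (exp_pos _).le
        (sum_nonneg fun k _ => mul_nonneg (hw k).le (exp_pos _).le))
      (eventually_exp_mul_norm_le_smoothing ha hw x)

end VanishingMass

section WeightExponent

variable {V ι : Type*} [NormedAddCommGroup V] [InnerProductSpace ℝ V] {w : ι → ℝ} {m : ι → V}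
  {a : ℝ}

lemma logit_eq_add_inner (x : V) (k : ι) : logit w m x k = logit w m 0 k + ⟪m k, x⟫ := by
  simp [logit, real_inner_comm x]

variable [Fintype ι]

/-- The polynomial `r k` for which `∑_k π_k e^{-ζ_k}` is the `entropicSum` of the posterior weights
of the mixture with weights `w` and means `m`. -/
noncomputable def weightExponent (a : ℝ) (w : ι → ℝ) (m : ι → V) (k : ι) (p : ι → ℝ) : ℝ :=
  (1 - a) / a ^ 2 * (scaledExponent a p m 0 k - a * (logit w m 0 k - ∑ i, p i * logit w m 0 i))

lemma differentiable_weightExponent (k : ι) : Differentiable ℝ (weightExponent a w m k) := by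
  unfold weightExponent scaledExponent
  refine .const_mul (.sub (.sub (.inner ℝ ?_ ?_) ?_) ?_) _ <;> fun_prop

lemma inner_sub_mean_eq [Nonempty ι] (x : V) (k : ι) :
    ⟪x, m k - ∑ i, softmax (logit w m x) i • m i⟫ =
      log (softmax (logit w m x) k) + ∑ i, negMulLog (softmax (logit w m x) i) -
        (logit w m 0 k - ∑ i, softmax (logit w m x) i * logit w m 0 i) := by
  set p := softmax (logit w m x) with hp
  set lse := log (∑ i, exp (logit w m x i))
  have inner_eq (i : ι) : ⟪x, m i⟫ = log (p i) - logit w m 0 i + lse := by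
    rw [hp, log_softmax, logit_eq_add_inner, real_inner_comm]
    ring
  simp_rw [inner_sub_right, inner_sum, real_inner_smul_right, inner_eq, negMulLog, mul_add,
    mul_sub, sum_add_distrib, sum_sub_distrib, ← sum_mul, hp, sum_softmax, neg_mul, sum_neg_distrib]
  ring

lemma softmax_logit_mul_exp_scaledExponent [Nonempty ι] (ha : a ≠ 0) (x : V) (k : ι) :
    softmax (logit w m x) k *
        exp ((1 - a) / a ^ 2 * scaledExponent a (softmax (logit w m x)) m x k) =
      softmax (logit w m x) k ^ a⁻¹ *
        exp (weightExponent a w m k (softmax (logit w m x)) -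
          (1 - a⁻¹) * ∑ i, negMulLog (softmax (logit w m x) i)) := by
  have pos : 0 < softmax (logit w m x) k := softmax_pos _ k
  have linear_part : scaledExponent a (softmax (logit w m x)) m x k =
      scaledExponent a (softmax (logit w m x)) m 0 k +
        a * ⟪x, m k - ∑ i, softmax (logit w m x) i • m i⟫ := by
    simp only [scaledExponent, inner_add_left, real_inner_smul_left, inner_zero_left]
    ring
  rw [linear_part, inner_sub_mean_eq, weightExponent, rpow_def_of_pos pos, ← Real.exp_add]
  nth_rw 1 [← exp_log pos]
  rw [← Real.exp_add]
  congr 1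
  field_simp
  ring

variable {d K : ℕ} [NeZero K] {w : Fin K → ℝ} {μ : Fin K → EuclideanSpace ℝ (Fin d)} {abar : ℝ}

lemma sum_postWeight_mul_exp_neg_zeta (ha : a ≠ 0) (hw : ∀ k, 0 < w k)
    (x : EuclideanSpace ℝ (Fin d)) :
    ∑ k, postWeight d K w μ abar k x * exp (-zeta d K w μ abar a k x) =
      entropicSum a⁻¹ (weightExponent a w fun i => √abar • μ i)
        (softmax fun i => logit w (fun i => √abar • μ i) 0 i + innerSL ℝ (√abar • μ i) x) := by
  have affine : (fun i => logit w (fun i => √abar • μ i) 0 i + innerSL ℝ (√abar • μ i) x) =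
      logit w (fun i => √abar • μ i) x := funext fun i => (logit_eq_add_inner x i).symm
  rw [affine, entropicSum]
  refine sum_congr rfl fun k _ => ?_
  rw [neg_zeta_eq ha hw x 0, ← softmax_logit_mul_exp_scaledExponent ha]
  simp_rw [sub_zero, postWeight_eq_softmax hw]

lemma mul_smoothedMass_compl_Eset_le_one [NeZero d] {T : ℕ} {C₁ C₂ : ℝ} (hw : ∀ k, 0 < w k)
    (hw1 : ∑ k, w k = 1)
    (htr : 1 < a → ∀ x, Matrix.trace (1 + gmmJac d K w μ abar x) ≤ C₁ * log (K * T)) :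
    (4 * π ^ 2 * a ^ 2 * (1 - a)) ^ (-(d : ℝ) / 2) *
      smoothedMass w (fun k => √abar • μ k) a (Eset d K T w μ abar a C₁ C₂)ᶜ ≤ 1 := by
  rcases le_or_gt a 0 with ha0 | ha0
  · simp [smoothedMass_eq_zero_of_nonpos ha0]
  rcases lt_trichotomy a 1 with ha | rfl | ha
  · simpa using mul_smoothedMass_le_one ha0 ha (fun k => (hw k).le) hw1
      (isClosed_Eset hw T C₁ C₂).isOpen_compl.measurableSet
  · simp [smoothedMass_one_eq_zero]
  · have compl_eq : (Eset d K T w μ abar a C₁ C₂)ᶜ =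
        {u | exp (C₂ * (1 - a) ^ 2 * log (K * T) ^ 2) <
          entropicSum a⁻¹ (weightExponent a w fun i => √abar • μ i)
            (softmax fun i => logit w (fun i => √abar • μ i) 0 i +
              innerSL ℝ (√abar • μ i) u)} := by
      ext u
      simp only [Eset, Set.mem_compl_iff, Set.mem_ofPred_eq, htr ha u, true_and, not_le,
        ← sum_postWeight_mul_exp_neg_zeta ha0.ne' hw]
    rw [compl_eq, smoothedMass_eq_zero_of_softmax ha hw (inv_pos.2 ha0) (inv_lt_one_of_one_lt₀ ha)
      differentiable_weightExponent, mul_zero]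
    exact zero_le_one

end WeightExponent

section Schedule

variable {T t : ℕ} {h : ℝ} {αbar α : ℕ → ℝ}

lemma logistic_recurrence_induction {P : ℝ → Prop}
    (step : ∀ x, P x → P (x + h * x * (1 - x))) (hT : P (αbar T))
    (hrec : ∀ t, 2 ≤ t → t ≤ T → αbar (t - 1) = αbar t + h * αbar t * (1 - αbar t))
    (ht : 1 ≤ t) (htT : t ≤ T) : P (αbar t) := by
  refine Nat.decreasingInduction' (fun k hkT htk hk => ?_) htT hT
  have := hrec (k + 1) (by lia) (by lia)
  rw [Nat.add_sub_cancel] at this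
  exact this ▸ step _ hk

lemma logistic_le (hh : 0 < h) (x : ℝ) : x + h * x * (1 - x) ≤ (1 + h) ^ 2 / (4 * h) := by
  rw [le_div_iff₀ (by positivity)]
  nlinarith [sq_nonneg (2 * h * x - (1 + h))]

lemma logistic_mem_Ioo (hh : 0 ≤ h) (hh1 : h ≤ 1) {x : ℝ} (hx : x ∈ Set.Ioo 0 1) :
    x + h * x * (1 - x) ∈ Set.Ioo 0 1 := by
  obtain ⟨hx0, hx1⟩ := hx
  have : 0 < 1 - x := sub_pos.2 hx1
  exact ⟨by positivity, by nlinarith [mul_le_mul_of_nonneg_right hh1 hx0.le]⟩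

lemma logistic_recurrence_le (hh : 0 < h) (hT : αbar T ≤ 1)
    (hrec : ∀ t, 2 ≤ t → t ≤ T → αbar (t - 1) = αbar t + h * αbar t * (1 - αbar t))
    (ht : 1 ≤ t) (htT : t ≤ T) : αbar t ≤ (1 + h) ^ 2 / (4 * h) := by
  refine logistic_recurrence_induction (P := (· ≤ _)) (fun x _ => logistic_le hh x) (hT.trans ?_)
    hrec ht htT
  simpa using logistic_le hh 1

lemma logistic_recurrence_ratio_mem_Ioo (hh : 0 < h) (hh1 : h ≤ 1) (hT : αbar T ∈ Set.Ioo 0 1)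
    (hrec : ∀ t, 2 ≤ t → t ≤ T → αbar (t - 1) = αbar t + h * αbar t * (1 - αbar t))
    (hα : ∀ t, 2 ≤ t → t ≤ T → α t = αbar t / αbar (t - 1)) (hα1 : α 1 = αbar 1)
    (ht : 1 ≤ t) (htT : t ≤ T) : 0 < αbar t ∧ α t ∈ Set.Ioo 0 1 := by
  have mem {s : ℕ} : 1 ≤ s → s ≤ T → αbar s ∈ Set.Ioo (0 : ℝ) 1 :=
    logistic_recurrence_induction (fun _ => logistic_mem_Ioo hh.le hh1) hT hrec
  have ⟨abar_pos, abar_lt⟩ := mem ht htT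
  refine ⟨abar_pos, ?_⟩
  rcases ht.eq_or_lt with rfl | ht2
  · exact hα1 ▸ mem ht htT
  · have prev_pos : 0 < αbar (t - 1) := (mem (by lia) (by lia)).1
    have growth : 0 < h * αbar t * (1 - αbar t) :=
      mul_pos (mul_pos hh abar_pos) (sub_pos.2 abar_lt)
    rw [hα t ht2 htT]
    refine ⟨div_pos abar_pos prev_pos, (div_lt_one prev_pos).2 ?_⟩
    rw [hrec t ht2 htT]
    exact lt_add_of_pos_right _ growth

lemma exists_forall_le_of_one_lt_mul_log_div (c : ℝ) (f : ℕ → ℝ) :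
    ∃ B, 0 ≤ B ∧ ∀ T : ℕ, 1 < c * (log T / T) → f T ≤ B := by
  have step_tendsto : Filter.Tendsto (fun T : ℕ => c * (log T / T)) .atTop (nhds 0) := by
    simpa using (isLittleO_log_id_atTop.tendsto_div_nhds_zero.comp
      tendsto_natCast_atTop_atTop).const_mul c
  have finite : {T : ℕ | 1 < c * (log T / T)}.Finite := by
    have := Nat.cofinite_eq_atTop ▸ step_tendsto.eventually_le_const one_pos
    simpa [Filter.eventually_cofinite] using this
  obtain ⟨B, hB⟩ := (finite.image f).bddAbove
  exact ⟨max B 0, le_max_right _ _, fun T hT => le_max_of_le_left (hB ⟨T, hT, rfl⟩)⟩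

end Schedule

section OneStep

variable {d K T : ℕ} [NeZero K] {w : Fin K → ℝ} {μ : Fin K → EuclideanSpace ℝ (Fin d)}
  {abar a C₁ C₂ : ℝ}

lemma mul_smoothedMass_compl_Eset_le (hT : 1 ≤ T) (hw : ∀ k, 0 < w k) (hw1 : ∑ k, w k = 1)
    (hab : 0 ≤ abar) (ha0 : 0 < a) (ha1 : a < 1) (hC₁ : 208 ≤ C₁) (hC₂ : 16000000 ≤ C₂)
    (hL : 1 / 2 ≤ log (K * T)) :
    (4 * π ^ 2 * a ^ 2 * (1 - a)) ^ (-(d : ℝ) / 2) *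
        smoothedMass w (fun k => √abar • μ k) a (Eset d K T w μ abar a C₁ C₂)ᶜ ≤
      4000000 * (1 / (T : ℝ) ^ 3 + (1 - a) ^ 2 * log (K * T) ^ 2) := by
  have meas : MeasurableSet (Eset d K T w μ abar a C₁ C₂)ᶜ :=
    (isClosed_Eset hw T C₁ C₂).isOpen_compl.measurableSet
  have cube_pos : 0 < 1 / (T : ℝ) ^ 3 := by positivity
  rcases le_or_gt ((1 - a) * log (K * T)) (1 / 2000) with haL | haL
  · have tail := mul_smoothedMass_le ha0 ha1 (fun k => (hw k).le) meas (by positivity)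
      (sum_mul_isotropicGaussian_compl_Eset_le (μ := μ) hT hw hw1 hab ha1.le hC₁ hC₂ hL haL)
    rw [finrank_euclideanSpace_fin] at tail
    refine tail.trans ?_
    rw [← mul_one_div]
    nlinarith [sq_nonneg ((1 - a) * log (K * T))]
  · have tail := mul_smoothedMass_le_one (m := fun k => √abar • μ k) ha0 ha1
      (fun k => (hw k).le) hw1 meas
    rw [finrank_euclideanSpace_fin] at tail
    rw [← mul_pow]
    nlinarith

lemma mul_smoothedMass_compl_Eset_le_of_cube_le [NeZero d] {C : ℝ} (hT : 1 ≤ T)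
    (hw : ∀ k, 0 < w k) (hw1 : ∑ k, w k = 1)
    (htr : 1 < a → ∀ x, Matrix.trace (1 + gmmJac d K w μ abar x) ≤ C₁ * log (K * T))
    (hC : (T : ℝ) ^ 3 ≤ C) :
    (4 * π ^ 2 * a ^ 2 * (1 - a)) ^ (-(d : ℝ) / 2) *
        smoothedMass w (fun k => √abar • μ k) a (Eset d K T w μ abar a C₁ C₂)ᶜ ≤
      C * (1 / (T : ℝ) ^ 3 + (1 - a) ^ 2 * log (K * T) ^ 2) := by
  have cube_pos : 0 < (T : ℝ) ^ 3 := by positivity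
  calc _ ≤ (1 : ℝ) := mul_smoothedMass_compl_Eset_le_one hw hw1 htr
    _ = (T : ℝ) ^ 3 * (1 / (T : ℝ) ^ 3) := (mul_one_div_cancel cube_pos.ne').symm
    _ ≤ C * (1 / (T : ℝ) ^ 3) := by gcongr
    _ ≤ _ := mul_le_mul_of_nonneg_left (le_add_of_nonneg_right (by positivity))
      (cube_pos.le.trans hC)

lemma log_two_le_log_natCast_mul (hT : 2 ≤ T) : log 2 ≤ log (K * T) := by
  refine log_le_log two_pos ?_
  exact_mod_cast hT.trans (Nat.le_mul_of_pos_left T (NeZero.pos K))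

lemma trace_one_add_gmmJac_le_mul_log {A B R : ℝ} (hT : 2 ≤ T) (hw : ∀ k, 0 < w k)
    (hA : 0 ≤ A) (hab : abar ≤ A) (hμ : ∀ k, ‖μ k‖ ≤ R) (hB : A * R ^ 2 / log 2 ≤ B)
    (x : EuclideanSpace ℝ (Fin d)) :
    Matrix.trace (1 + gmmJac d K w μ abar x) ≤ B * log (K * T) := by
  have log_two_pos : 0 < log 2 := log_pos one_lt_two
  calc _ ≤ A * R ^ 2 := trace_one_add_gmmJac_le_mul_sq hA hab hw hμ x
    _ ≤ B * log 2 := (div_le_iff₀ log_two_pos).1 hB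
    _ ≤ B * log (K * T) := mul_le_mul_of_nonneg_left (log_two_le_log_natCast_mul hT)
      ((by positivity : 0 ≤ A * R ^ 2 / log 2).trans hB)

end OneStep

theorem stmt12_general (cR : ℝ) {c₁ : ℝ} (hc₁ : 0 < c₁) :
    ∃ C₁ C₂ C : ℝ, 0 < C₁ ∧ 0 < C₂ ∧ 0 < C ∧
      ∀ c₀ : ℝ, 0 < c₀ → ∀ d K T : ℕ, 1 ≤ d → 1 ≤ T →
        ∀ (w : Fin K → ℝ) (μ : Fin K → EuclideanSpace ℝ (Fin d)),
          (∀ k, 0 < w k) → (∑ k, w k = 1) →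
          (∀ k, ‖μ k‖ ≤ (T : ℝ) ^ cR) →
          ∀ αbar α : ℕ → ℝ,
            αbar T = (T : ℝ) ^ (-c₀) →
            (∀ t : ℕ, 2 ≤ t → t ≤ T →
              αbar (t - 1) = αbar t + c₁ * (log T / T) * αbar t * (1 - αbar t)) →
            (∀ t : ℕ, 2 ≤ t → t ≤ T → α t = αbar t / αbar (t - 1)) →
            α 1 = αbar 1 →
            ∀ t : ℕ, 1 ≤ t → t ≤ T →
              (∫ x, ∫ u in (Eset d K T w μ (αbar t) (α t) C₁ C₂)ᶜ,
                  (4 * π ^ 2 * α t ^ 2 * (1 - α t)) ^ (-(d : ℝ) / 2) *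
                    exp (-‖√(α t) • x - u‖ ^ 2 / (2 * α t * (1 - α t))) *
                    ∑ k, w k * exp (-‖u - √(αbar t) • μ k‖ ^ 2 / (2 * α t ^ 2))) ≤
                C * (1 / (T : ℝ) ^ 3 + (1 - α t) ^ 2 * log (K * T) ^ 2) := by
  obtain ⟨B, hB0, hB⟩ := exists_forall_le_of_one_lt_mul_log_div c₁ fun T =>
    (1 + c₁ * (log T / T)) ^ 2 / (4 * (c₁ * (log T / T))) * ((T : ℝ) ^ cR) ^ 2 / log 2
  obtain ⟨N, hN0, hN⟩ := exists_forall_le_of_one_lt_mul_log_div c₁ fun T => (T : ℝ) ^ 3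
  refine ⟨208 + B, 16000000, 4000000 + N, by positivity, by norm_num, by positivity, ?_⟩
  intro c₀ hc₀ d K T hd hT w μ hw hw1 hμ αbar α habarT hrec hα hα1 t ht htT
  simp_rw [mul_assoc (_ ^ (-(d : ℝ) / 2)), integral_const_mul]
  change _ * smoothedMass w (fun k => √(αbar t) • μ k) (α t) _ ≤ _
  have : NeZero d := ⟨by lia⟩
  have : NeZero K := ⟨by rintro rfl; simp at hw1⟩
  set h := c₁ * (log T / T)
  rcases hT.eq_or_lt with rfl | hT2
  · obtain rfl : t = 1 := le_antisymm htT ht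
    refine mul_smoothedMass_compl_Eset_le_of_cube_le le_rfl hw hw1 (fun ha => ?_) ?_
    · simp [hα1, habarT] at ha
    · norm_num; linarith
  have one_lt : (1 : ℝ) < T := mod_cast hT2
  have h_pos : 0 < h := mul_pos hc₁ (div_pos (log_pos one_lt) (one_pos.trans one_lt))
  have abarT_lt : αbar T < 1 := habarT ▸ rpow_lt_one_of_one_lt_of_neg one_lt (neg_neg_of_pos hc₀)
  rcases le_or_gt h 1 with h_le | h_gt
  · have ⟨abar_pos, a_pos, a_lt⟩ := logistic_recurrence_ratio_mem_Ioo h_pos h_le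
      ⟨habarT ▸ by positivity, abarT_lt⟩ hrec hα hα1 ht htT
    have log_ge : 1 / 2 ≤ log (K * T) := by
      linarith [log_two_gt_d9, log_two_le_log_natCast_mul (K := K) hT2]
    refine (mul_smoothedMass_compl_Eset_le hT hw hw1 abar_pos.le a_pos a_lt
      (by linarith) le_rfl log_ge).trans ?_
    gcongr
    linarith
  · refine mul_smoothedMass_compl_Eset_le_of_cube_le hT hw hw1 (fun _ => ?_)
      ((hN T h_gt).trans (by linarith))
    exact trace_one_add_gmmJac_le_mul_log hT2 hw (by positivity)
      (logistic_recurrence_le h_pos abarT_lt.le hrec ht htT) hμ ((hB T h_gt).trans (by linarith))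

/-- Claim (60). For every `t ∈ [T]`, the function
`δ_{t−1}(x) := ∫_{E_t^c} (4π² α_t² (1−α_t))^{−d/2} exp(−‖√α_t x − u‖²/(2α_t(1−α_t)))
  ∑_k π_k exp(−‖u − √ᾱ_t μ_k‖²/(2α_t²)) du`
satisfies `∫ δ_{t−1} ≤ C (T^{−3} + (1−α_t)² log²(KT))` for some absolute constant `C > 0`. -/
theorem stmt12 :
    ∀ cR : ℝ, 0 < cR →
      ∃ c₀₀ c₁₀ : ℝ, 0 < c₀₀ ∧ 0 < c₁₀ ∧
        ∀ c₀ c₁ : ℝ, c₀₀ ≤ c₀ → c₁₀ ≤ c₁ → 4 < c₁ / c₀ →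
          ∃ C₁ C₂ C : ℝ, 0 < C₁ ∧ 0 < C₂ ∧ 0 < C ∧
            ∀ (d K T : ℕ), 1 ≤ d → 1 ≤ K → 1 ≤ T →
              ∀ (w : Fin K → ℝ) (μ : Fin K → EuclideanSpace ℝ (Fin d)),
                (∀ k, w k ∈ Set.Ioo (0 : ℝ) 1) → (∑ k, w k = 1) →
                (∀ k, ‖μ k‖ ≤ (T : ℝ) ^ cR) →
                ∀ (αbar α : ℕ → ℝ),
                  αbar T = (T : ℝ) ^ (-c₀) →
                  (∀ t : ℕ, 2 ≤ t → t ≤ T →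
                    αbar (t - 1) = αbar t + c₁ * (Real.log T / T) * αbar t * (1 - αbar t)) →
                  (∀ t : ℕ, 2 ≤ t → t ≤ T → α t = αbar t / αbar (t - 1)) →
                  α 1 = αbar 1 →
                  ∀ t : ℕ, 1 ≤ t → t ≤ T →
                    (∫ x, (∫ u in (Eset d K T w μ (αbar t) (α t) C₁ C₂)ᶜ,
                        (4 * Real.pi ^ 2 * (α t) ^ 2 * (1 - α t)) ^ (-(d : ℝ) / 2) *
                          Real.exp (-‖Real.sqrt (α t) • x - u‖ ^ 2 /
                            (2 * α t * (1 - α t))) *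
                          ∑ k, w k *
                            Real.exp (-‖u - Real.sqrt (αbar t) • μ k‖ ^ 2 /
                              (2 * (α t) ^ 2)))) ≤
                      C * (1 / (T : ℝ) ^ 3 +
                        (1 - α t) ^ 2 * Real.log ((K : ℝ) * T) ^ 2) := by
  intro cR _
  refine ⟨1, 1, one_pos, one_pos, fun c₀ c₁ hc₀ hc₁ _ => ?_⟩
  obtain ⟨C₁, C₂, C, hC₁, hC₂, hC, bound⟩ := stmt12_general cR (one_pos.trans_le hc₁)
  exact ⟨C₁, C₂, C, hC₁, hC₂, hC, fun d K T hd _ hT w μ hw =>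
    bound c₀ (one_pos.trans_le hc₀) d K T hd hT w μ fun k => (hw k).1⟩
end

section
/- Let X_0 be a random vector in ℝ^d with E‖X_0‖₂² < ∞, let ᾱ ∈ (0, 1/2], and let X = √ᾱ X_0 + √(1−ᾱ) W with W ~ N(0, I_d) independent of X_0. Then KL( p_X ∥ N(0, I_d) ) ≤ (1/2) ( d(1−ᾱ) − d + ᾱ E‖X_0‖₂² − d log(1−ᾱ) ); in particular, KL( p_X ∥ N(0, I_d) ) ≤ C ᾱ ( E‖X_0‖₂² + d ) for some absolute constant C > 0. -/
open MeasureTheory Real Finset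
open scoped RealInnerProductSpace BigOperators

/-!
By convexity of `t ↦ t log t`, the divergence `KL(· ∥ N(0, I_d))` of a mixture is at most the
average of the divergences of its components. Conditionally on `X₀ = y` the vector `X` is
`N(√ᾱ y, (1 - ᾱ) I_d)`, whose divergence from `N(0, I_d)` is
`(d (1 - ᾱ) - d + ᾱ ‖y‖² - d log (1 - ᾱ)) / 2`; averaging over `y` gives the first bound. The second
follows from `-log (1 - ᾱ) ≤ ᾱ / (1 - ᾱ)`. The second moment of a Gaussian is obtained by
differentiating `∫ exp (-b ‖x‖²) dx = (π / b) ^ (d / 2)` in `b`.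
-/

section RelEntropy

variable {α β : Type*} [MeasurableSpace α] [MeasurableSpace β] {μ : Measure α} {ν : Measure β}
  {k : α → β → ℝ} {q : α → ℝ}

/-- The Kullback–Leibler divergence `KL(p ∥ q)` of two densities with respect to a reference
measure `μ`. As a Bochner integral it is `0` when the integrand is not integrable. -/
noncomputable def relEntropy (μ : Measure α) (p q : α → ℝ) : ℝ :=
  ∫ x, p x * log (p x / q x) ∂μ

lemma sub_le_mul_log_div {a b : ℝ} (ha : 0 ≤ a) (hb : 0 < b) : a - b ≤ a * log (a / b) := by
  rcases ha.eq_or_lt with rfl | ha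
  · simpa using hb.le
  · calc a - b = a * (1 - (a / b)⁻¹) := by field_simp
      _ ≤ a * log (a / b) := by gcongr; exact one_sub_inv_le_log_of_pos (by positivity)

lemma integral_mul_log_integral_div_le [IsProbabilityMeasure ν] {f : β → ℝ} {c : ℝ} (hc : 0 < c)
    (hf₀ : ∀ y, 0 ≤ f y) (hf : Integrable f ν)
    (hlog : Integrable (fun y => f y * log (f y / c)) ν) :
    (∫ y, f y ∂ν) * log ((∫ y, f y ∂ν) / c) ≤ ∫ y, f y * log (f y / c) ∂ν := by
  have rescale (t : ℝ) : t * log (t / c) = c * (t / c * log (t / c)) := by field_simp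
  have hint : Integrable (fun y => f y / c * log (f y / c)) ν :=
    (hlog.div_const c).congr (.of_forall fun y => by ring)
  have jensen := convexOn_mul_log.map_integral_le continuous_mul_log.continuousOn isClosed_Ici
    (.of_forall fun y => div_nonneg (hf₀ y) hc.le) (hf.div_const c) hint
  rw [integral_div] at jensen
  simp_rw [rescale, integral_const_mul]
  gcongr

lemma integrable_prod_mul_log_div [SFinite μ] [IsFiniteMeasure ν] (hk₀ : ∀ x y, 0 ≤ k x y)
    (hq₀ : ∀ x, 0 < q x) (hq : Integrable q μ) (hk : Integrable (Function.uncurry k) (μ.prod ν))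
    (hlog : ∀ y, Integrable (fun x => k x y * log (k x y / q x)) μ)
    (hent : Integrable (fun y => relEntropy μ (fun x => k x y) q) ν) :
    Integrable (Function.uncurry fun x y => k x y * log (k x y / q x)) (μ.prod ν) := by
  -- Adding `q - k` makes the integrand nonnegative, so that Tonelli applies.
  have hqk : Integrable (fun z : α × β => q z.1 - k z.1 z.2) (μ.prod ν) := (hq.comp_fst ν).sub hk
  have hmeas : AEStronglyMeasurable
      (fun z : α × β => k z.1 z.2 * log (k z.1 z.2 / q z.1)) (μ.prod ν) :=
    (hk.aemeasurable.mul
      (hk.aemeasurable.div (hq.comp_fst ν).aemeasurable).log).aestronglyMeasurable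
  have hsum : Integrable
      (fun z : α × β => k z.1 z.2 * log (k z.1 z.2 / q z.1) + (q z.1 - k z.1 z.2)) (μ.prod ν) := by
    refine (integrable_prod_iff' (hmeas.add hqk.aestronglyMeasurable)).2 ⟨?_, ?_⟩
    · filter_upwards [hqk.prod_left_ae] with y hy using (hlog y).add hy
    · refine (hent.add hqk.integral_prod_right).congr ?_
      filter_upwards [hqk.prod_left_ae] with y hy
      rw [Pi.add_apply, relEntropy, ← integral_add (hlog y) hy]
      refine integral_congr_ae (.of_forall fun x => (norm_of_nonneg ?_).symm)
      linarith [sub_le_mul_log_div (hk₀ x y) (hq₀ x)]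
  exact (hsum.sub hqk).congr (.of_forall fun z => add_sub_cancel_right _ _)

section Mixture

variable [SFinite μ] [IsProbabilityMeasure ν] (hk₀ : ∀ x y, 0 ≤ k x y) (hq₀ : ∀ x, 0 < q x)
  (hk : Integrable (Function.uncurry k) (μ.prod ν))
  (hlog : Integrable (Function.uncurry fun x y => k x y * log (k x y / q x)) (μ.prod ν))

include hk₀ hq₀ hk hlog

lemma mixture_mul_log_div_le_ae :
    (fun x => (∫ y, k x y ∂ν) * log ((∫ y, k x y ∂ν) / q x)) ≤ᵐ[μ]
      fun x => ∫ y, k x y * log (k x y / q x) ∂ν := by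
  filter_upwards [hk.prod_right_ae, hlog.prod_right_ae] with x hx hxlog
  exact integral_mul_log_integral_div_le (hq₀ x) (hk₀ x) hx hxlog

lemma integrable_mixture_mul_log_div (hq : Integrable q μ) :
    Integrable (fun x => (∫ y, k x y ∂ν) * log ((∫ y, k x y ∂ν) / q x)) μ := by
  have hp : Integrable (fun x => ∫ y, k x y ∂ν) μ := hk.integral_prod_left
  refine integrable_of_le_of_le
    (hp.aemeasurable.mul (hp.aemeasurable.div hq.aemeasurable).log).aestronglyMeasurable
    (.of_forall fun x => sub_le_mul_log_div (integral_nonneg (hk₀ x)) (hq₀ x))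
    (mixture_mul_log_div_le_ae hk₀ hq₀ hk hlog) (hp.sub hq) hlog.integral_prod_left

lemma relEntropy_mixture_le (hq : Integrable q μ) :
    relEntropy μ (fun x => ∫ y, k x y ∂ν) q ≤ ∫ y, relEntropy μ (fun x => k x y) q ∂ν :=
  calc relEntropy μ (fun x => ∫ y, k x y ∂ν) q
      ≤ ∫ x, ∫ y, k x y * log (k x y / q x) ∂ν ∂μ :=
        integral_mono_ae (integrable_mixture_mul_log_div hk₀ hq₀ hk hlog hq)
          hlog.integral_prod_left (mixture_mul_log_div_le_ae hk₀ hq₀ hk hlog)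
    _ = ∫ y, relEntropy μ (fun x => k x y) q ∂ν := integral_integral_swap hlog

end Mixture

end RelEntropy

section RexpNegMulSqNorm

variable {V : Type*} [NormedAddCommGroup V] [InnerProductSpace ℝ V] [FiniteDimensional ℝ V]
  [MeasurableSpace V] [BorelSpace V] {b : ℝ}

lemma integrable_rexp_neg_mul_sq_norm (hb : 0 < b) :
    Integrable fun x : V => rexp (-b * ‖x‖ ^ 2) :=
  .of_integral_ne_zero <| by
    rw [GaussianFourier.integral_rexp_neg_mul_sq_norm hb]
    positivity

lemma mul_rexp_neg_mul_le (hb : 0 < b) (t : ℝ) :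
    t * rexp (-b * t) ≤ 2 / b * rexp (-(b / 2) * t) := by
  have hsplit : rexp (-b * t) = rexp (-(b / 2) * t) * rexp (-(b / 2 * t)) := by
    rw [← exp_add]; ring_nf
  have hlin : t * rexp (-(b / 2 * t)) ≤ 2 / b := by
    rw [exp_neg, ← div_eq_mul_inv, div_le_iff₀ (exp_pos _)]
    calc t = 2 / b * (b / 2 * t) := by field_simp
      _ ≤ 2 / b * rexp (b / 2 * t) := by gcongr; linarith [add_one_le_exp (b / 2 * t)]
  calc t * rexp (-b * t) = t * rexp (-(b / 2 * t)) * rexp (-(b / 2) * t) := by rw [hsplit]; ring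
    _ ≤ 2 / b * rexp (-(b / 2) * t) := by gcongr

lemma integrable_sq_norm_mul_rexp_neg_mul_sq_norm (hb : 0 < b) :
    Integrable fun x : V => ‖x‖ ^ 2 * rexp (-b * ‖x‖ ^ 2) := by
  refine ((integrable_rexp_neg_mul_sq_norm (half_pos hb)).const_mul (2 / b)).mono'
    (by fun_prop) (.of_forall fun x => ?_)
  rw [norm_of_nonneg (by positivity)]
  exact mul_rexp_neg_mul_le hb _

lemma hasDerivAt_integral_rexp_neg_mul_sq_norm (hb : 0 < b) :
    HasDerivAt (fun c => ∫ x : V, rexp (-c * ‖x‖ ^ 2))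
      (∫ x : V, -(‖x‖ ^ 2 * rexp (-b * ‖x‖ ^ 2))) b := by
  refine (hasDerivAt_integral_of_dominated_loc_of_deriv_le (s := Set.Ioi (b / 2))
    (F' := fun c x => -(‖x‖ ^ 2 * rexp (-c * ‖x‖ ^ 2))) (Ioi_mem_nhds (half_lt_self hb))
    (.of_forall fun c => by fun_prop) (integrable_rexp_neg_mul_sq_norm hb) (by fun_prop)
    (.of_forall fun x c hc => ?_) (integrable_sq_norm_mul_rexp_neg_mul_sq_norm (half_pos hb))
    (.of_forall fun x c _ => ?_)).2
  · rw [norm_neg, norm_of_nonneg (by positivity)]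
    gcongr
    exact (Set.mem_Ioi.1 hc).le
  · exact ((hasDerivAt_id c).neg.mul_const (‖x‖ ^ 2)).exp.congr_deriv (by simp [mul_comm])

lemma integral_sq_norm_mul_rexp_neg_mul_sq_norm (hb : 0 < b) :
    ∫ x : V, ‖x‖ ^ 2 * rexp (-b * ‖x‖ ^ 2) =
      Module.finrank ℝ V / (2 * b) * (π / b) ^ (Module.finrank ℝ V / 2 : ℝ) := by
  have hderiv : HasDerivAt (fun c => (π / c) ^ (Module.finrank ℝ V / 2 : ℝ))
      (-(Module.finrank ℝ V / (2 * b) * (π / b) ^ (Module.finrank ℝ V / 2 : ℝ))) b := by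
    refine (((hasDerivAt_inv hb.ne').const_mul π).rpow_const
      (p := (Module.finrank ℝ V / 2 : ℝ)) (.inl (by positivity))).congr_deriv ?_
    rw [← div_eq_mul_inv, rpow_sub_one (by positivity)]
    field_simp
  have hclosed : (fun c => ∫ x : V, rexp (-c * ‖x‖ ^ 2)) =ᶠ[nhds b]
      fun c => (π / c) ^ (Module.finrank ℝ V / 2 : ℝ) := by
    filter_upwards [Ioi_mem_nhds hb] with c hc
      using GaussianFourier.integral_rexp_neg_mul_sq_norm hc
  have huniq := (hasDerivAt_integral_rexp_neg_mul_sq_norm hb).unique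
    (hderiv.congr_of_eventuallyEq hclosed)
  rwa [integral_neg, neg_inj] at huniq

lemma integrable_inner_mul_rexp_neg_mul_sq_norm (hb : 0 < b) (w : V) :
    Integrable fun x : V => ⟪x, w⟫ * rexp (-b * ‖x‖ ^ 2) := by
  refine ((integrable_sq_norm_mul_rexp_neg_mul_sq_norm hb).add
    ((integrable_rexp_neg_mul_sq_norm hb).const_mul (‖w‖ ^ 2))).mono'
    (by fun_prop) (.of_forall fun x => ?_)
  have hinner : |⟪x, w⟫| ≤ ‖x‖ ^ 2 + ‖w‖ ^ 2 := by
    nlinarith [abs_real_inner_le_norm x w, two_mul_le_add_sq ‖x‖ ‖w‖, norm_nonneg x, norm_nonneg w]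
  calc ‖⟪x, w⟫ * rexp (-b * ‖x‖ ^ 2)‖ = |⟪x, w⟫| * rexp (-b * ‖x‖ ^ 2) := by
        rw [norm_mul, norm_eq_abs, norm_of_nonneg (exp_pos _).le]
    _ ≤ (‖x‖ ^ 2 + ‖w‖ ^ 2) * rexp (-b * ‖x‖ ^ 2) := by gcongr
    _ = ‖x‖ ^ 2 * rexp (-b * ‖x‖ ^ 2) + ‖w‖ ^ 2 * rexp (-b * ‖x‖ ^ 2) := add_mul ..

lemma integral_inner_mul_rexp_neg_mul_sq_norm (b : ℝ) (w : V) :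
    ∫ x : V, ⟪x, w⟫ * rexp (-b * ‖x‖ ^ 2) = 0 := by
  have hodd := integral_neg_eq_self (fun x : V => ⟪x, w⟫ * rexp (-b * ‖x‖ ^ 2)) volume
  simp only [inner_neg_left, norm_neg, neg_mul ⟪_, w⟫, integral_neg] at hodd
  linarith

end RexpNegMulSqNorm

section GaussV

variable {d : ℕ} {v : ℝ}

lemma gaussV_pos (hv : 0 < v) (m x : EuclideanSpace ℝ (Fin d)) : 0 < gaussV d v m x := by
  unfold gaussV
  positivity

lemma continuous_gaussV (d : ℕ) (v : ℝ) :
    Continuous fun z : EuclideanSpace ℝ (Fin d) × EuclideanSpace ℝ (Fin d) =>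
      gaussV d v z.1 z.2 := by
  unfold gaussV
  fun_prop

lemma gaussV_eq_mul_rexp (v : ℝ) (m x : EuclideanSpace ℝ (Fin d)) :
    gaussV d v m x = (2 * π * v) ^ (-(d : ℝ) / 2) * rexp (-(2 * v)⁻¹ * ‖x - m‖ ^ 2) := by
  rw [gaussV, neg_mul, inv_mul_eq_div, neg_div (2 * v)]

lemma rpow_mul_rpow_pi_div_inv (d : ℕ) (hv : 0 < v) :
    (2 * π * v) ^ (-(d : ℝ) / 2) * (π / (2 * v)⁻¹) ^ (d / 2 : ℝ) = 1 := by
  have hbase : π / (2 * v)⁻¹ = 2 * π * v := by rw [div_inv_eq_mul]; ring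
  rw [hbase, ← rpow_add (by positivity), neg_div, neg_add_cancel, rpow_zero]

lemma integrable_gaussV (hv : 0 < v) (m : EuclideanSpace ℝ (Fin d)) :
    Integrable (gaussV d v m) := by
  simp_rw [funext (gaussV_eq_mul_rexp v m)]
  exact ((integrable_rexp_neg_mul_sq_norm (by positivity)).const_mul _).comp_sub_right m

lemma integral_gaussV (hv : 0 < v) (m : EuclideanSpace ℝ (Fin d)) : ∫ x, gaussV d v m x = 1 := by
  simp_rw [gaussV_eq_mul_rexp, integral_const_mul]
  rw [integral_sub_right_eq_self (fun x => rexp (-(2 * v)⁻¹ * ‖x‖ ^ 2)) m,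
    GaussianFourier.integral_rexp_neg_mul_sq_norm (by positivity), finrank_euclideanSpace_fin,
    rpow_mul_rpow_pi_div_inv d hv]

lemma integrable_sq_norm_sub_mul_gaussV (hv : 0 < v) (m : EuclideanSpace ℝ (Fin d)) :
    Integrable fun x => ‖x - m‖ ^ 2 * gaussV d v m x := by
  simp_rw [gaussV_eq_mul_rexp, mul_left_comm]
  exact ((integrable_sq_norm_mul_rexp_neg_mul_sq_norm (by positivity)).const_mul _).comp_sub_right m

lemma integral_sq_norm_sub_mul_gaussV (hv : 0 < v) (m : EuclideanSpace ℝ (Fin d)) :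
    ∫ x, ‖x - m‖ ^ 2 * gaussV d v m x = d * v := by
  simp_rw [gaussV_eq_mul_rexp, mul_left_comm, integral_const_mul]
  rw [integral_sub_right_eq_self (fun x => ‖x‖ ^ 2 * rexp (-(2 * v)⁻¹ * ‖x‖ ^ 2)) m,
    integral_sq_norm_mul_rexp_neg_mul_sq_norm (by positivity), finrank_euclideanSpace_fin,
    mul_left_comm, rpow_mul_rpow_pi_div_inv d hv]
  field_simp

lemma integrable_inner_sub_mul_gaussV (hv : 0 < v) (m w : EuclideanSpace ℝ (Fin d)) :
    Integrable fun x => ⟪x - m, w⟫ * gaussV d v m x := by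
  simp_rw [gaussV_eq_mul_rexp, mul_left_comm]
  exact ((integrable_inner_mul_rexp_neg_mul_sq_norm (by positivity) w).const_mul _).comp_sub_right m

lemma integral_inner_sub_mul_gaussV (v : ℝ) (m w : EuclideanSpace ℝ (Fin d)) :
    ∫ x, ⟪x - m, w⟫ * gaussV d v m x = 0 := by
  simp_rw [gaussV_eq_mul_rexp, mul_left_comm, integral_const_mul]
  rw [integral_sub_right_eq_self (fun x => ⟪x, w⟫ * rexp (-(2 * v)⁻¹ * ‖x‖ ^ 2)) m,
    integral_inner_mul_rexp_neg_mul_sq_norm, mul_zero]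

lemma log_gaussV (hv : 0 < v) (m x : EuclideanSpace ℝ (Fin d)) :
    log (gaussV d v m x) = -(d / 2) * log (2 * π * v) - ‖x - m‖ ^ 2 / (2 * v) := by
  rw [gaussV, log_mul (by positivity) (by positivity), log_rpow (by positivity), log_exp]
  ring

lemma log_gaussV_div_gaussV_one_zero (hv : 0 < v) (m x : EuclideanSpace ℝ (Fin d)) :
    log (gaussV d v m x / gaussV d 1 0 x) =
      (1 - v⁻¹) / 2 * ‖x - m‖ ^ 2 + ⟪x - m, m⟫ + (‖m‖ ^ 2 - d * log v) / 2 := by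
  have hnorm : ‖x‖ ^ 2 = ‖x - m‖ ^ 2 + 2 * ⟪x - m, m⟫ + ‖m‖ ^ 2 := by
    rw [← norm_add_sq_real, sub_add_cancel]
  rw [log_div (gaussV_pos hv m x).ne' (gaussV_pos one_pos 0 x).ne', log_gaussV hv,
    log_gaussV one_pos, log_mul (by positivity) hv.ne', sub_zero, hnorm, mul_one]
  field_simp
  ring

lemma gaussV_mul_log_div (hv : 0 < v) (m x : EuclideanSpace ℝ (Fin d)) :
    gaussV d v m x * log (gaussV d v m x / gaussV d 1 0 x) =
      (1 - v⁻¹) / 2 * (‖x - m‖ ^ 2 * gaussV d v m x) + ⟪x - m, m⟫ * gaussV d v m x +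
        (‖m‖ ^ 2 - d * log v) / 2 * gaussV d v m x := by
  rw [log_gaussV_div_gaussV_one_zero hv]
  ring

lemma integrable_gaussV_mul_log_div (hv : 0 < v) (m : EuclideanSpace ℝ (Fin d)) :
    Integrable fun x => gaussV d v m x * log (gaussV d v m x / gaussV d 1 0 x) := by
  simp_rw [gaussV_mul_log_div hv]
  exact (((integrable_sq_norm_sub_mul_gaussV hv m).const_mul _).add
    (integrable_inner_sub_mul_gaussV hv m m)).add ((integrable_gaussV hv m).const_mul _)

lemma relEntropy_gaussV (hv : 0 < v) (m : EuclideanSpace ℝ (Fin d)) :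
    relEntropy volume (gaussV d v m) (gaussV d 1 0) =
      1 / 2 * (d * v - d + ‖m‖ ^ 2 - d * log v) := by
  have hsq := (integrable_sq_norm_sub_mul_gaussV hv m).const_mul ((1 - v⁻¹) / 2)
  have hinner := integrable_inner_sub_mul_gaussV hv m m
  simp_rw [relEntropy, gaussV_mul_log_div hv]
  rw [integral_add (hsq.fun_add hinner) ((integrable_gaussV hv m).const_mul _),
    integral_add hsq hinner, integral_const_mul, integral_const_mul,
    integral_sq_norm_sub_mul_gaussV hv, integral_inner_sub_mul_gaussV, integral_gaussV hv]
  field_simp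
  ring

end GaussV

section GaussMixture

variable {Ω : Type*} [MeasurableSpace Ω] {ν : Measure Ω} {d : ℕ} {v : ℝ}
  {m : Ω → EuclideanSpace ℝ (Fin d)}

/-- Density of `m + √v W`, where `m` is a random vector on the probability space `(Ω, ν)` and
`W ~ N(0, I_d)` is independent of `m`. -/
noncomputable def gaussMixture (d : ℕ) (v : ℝ) (m : Ω → EuclideanSpace ℝ (Fin d)) (ν : Measure Ω)
    (x : EuclideanSpace ℝ (Fin d)) : ℝ :=
  ∫ ω, gaussV d v (m ω) x ∂ν

lemma integrable_prod_gaussV [IsFiniteMeasure ν] (hv : 0 < v) (hm : AEStronglyMeasurable m ν) :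
    Integrable (Function.uncurry fun x ω => gaussV d v (m ω) x) (volume.prod ν) := by
  have hpair : AEStronglyMeasurable (fun z : EuclideanSpace ℝ (Fin d) × Ω => (m z.2, z.1))
      (volume.prod ν) :=
    hm.comp_snd.prodMk measurable_fst.aestronglyMeasurable
  refine (integrable_prod_iff' ((continuous_gaussV d v).comp_aestronglyMeasurable hpair)).2
    ⟨.of_forall fun ω => integrable_gaussV hv (m ω), ?_⟩
  simp [norm_of_nonneg (gaussV_pos hv _ _).le, integral_gaussV hv]

variable [IsProbabilityMeasure ν]

lemma integrable_prod_gaussV_mul_log_div (hv : 0 < v) (hm : MemLp m 2 ν) :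
    Integrable (Function.uncurry fun x ω =>
      gaussV d v (m ω) x * log (gaussV d v (m ω) x / gaussV d 1 0 x)) (volume.prod ν) := by
  refine integrable_prod_mul_log_div (fun x ω => (gaussV_pos hv (m ω) x).le) (gaussV_pos one_pos 0)
    (integrable_gaussV one_pos 0) (integrable_prod_gaussV hv hm.1)
    (fun ω => integrable_gaussV_mul_log_div hv (m ω)) ?_
  simp_rw [relEntropy_gaussV hv]
  have hsq : Integrable (fun ω => ‖m ω‖ ^ 2) ν := hm.integrable_norm_pow two_ne_zero
  fun_prop

lemma integrable_gaussMixture_mul_log_div (hv : 0 < v) (hm : MemLp m 2 ν) :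
    Integrable fun x => gaussMixture d v m ν x * log (gaussMixture d v m ν x / gaussV d 1 0 x) :=
  integrable_mixture_mul_log_div (fun x ω => (gaussV_pos hv (m ω) x).le) (gaussV_pos one_pos 0)
    (integrable_prod_gaussV hv hm.1) (integrable_prod_gaussV_mul_log_div hv hm)
    (integrable_gaussV one_pos 0)

lemma relEntropy_gaussMixture_le (hv : 0 < v) (hm : MemLp m 2 ν) :
    relEntropy volume (gaussMixture d v m ν) (gaussV d 1 0) ≤
      1 / 2 * (d * v - d + (∫ ω, ‖m ω‖ ^ 2 ∂ν) - d * log v) := by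
  have hsq : Integrable (fun ω => ‖m ω‖ ^ 2) ν := hm.integrable_norm_pow two_ne_zero
  calc relEntropy volume (gaussMixture d v m ν) (gaussV d 1 0)
      ≤ ∫ ω, relEntropy volume (gaussV d v (m ω)) (gaussV d 1 0) ∂ν :=
        relEntropy_mixture_le (fun x ω => (gaussV_pos hv (m ω) x).le) (gaussV_pos one_pos 0)
          (integrable_prod_gaussV hv hm.1) (integrable_prod_gaussV_mul_log_div hv hm)
          (integrable_gaussV one_pos 0)
    _ = ∫ ω, (1 / 2 * ‖m ω‖ ^ 2 + 1 / 2 * (d * v - d - d * log v)) ∂ν := by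
        simp_rw [relEntropy_gaussV hv]
        congr! 2 with ω
        ring
    _ = 1 / 2 * (d * v - d + (∫ ω, ‖m ω‖ ^ 2 ∂ν) - d * log v) := by
        rw [integral_add (hsq.const_mul _) (integrable_const _), integral_const_mul,
          integral_const, probReal_univ, one_smul]
        ring

end GaussMixture

lemma half_mul_sub_log_one_sub_le {a r M D : ℝ} (ha : 0 ≤ a) (har : a ≤ r) (hr : r < 1)
    (hM : 0 ≤ M) (hD : 0 ≤ D) :
    1 / 2 * (D * (1 - a) - D + a * M - D * log (1 - a)) ≤
      1 / (2 * (1 - r)) * a * (M + D) := by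
  have ha1 : 0 < 1 - a := by linarith
  have hlog : -log (1 - a) ≤ (1 - a)⁻¹ - 1 := by linarith [one_sub_inv_le_log_of_pos ha1]
  calc 1 / 2 * (D * (1 - a) - D + a * M - D * log (1 - a))
      = 1 / 2 * (a * M + D * (-a + -log (1 - a))) := by ring
    _ ≤ 1 / 2 * (a * M + D * (-a + ((1 - a)⁻¹ - 1))) := by gcongr
    _ = 1 / (2 * (1 - a)) * a * ((1 - a) * M + a * D) := by field_simp; ring
    _ ≤ 1 / (2 * (1 - r)) * a * (1 * M + 1 * D) := by gcongr <;> linarith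
    _ = 1 / (2 * (1 - r)) * a * (M + D) := by ring

theorem stmt19_general {r : ℝ} (hr : r < 1) :
    ∃ C : ℝ, 0 < C ∧
      ∀ (d : ℕ) (μ₀ : Measure (EuclideanSpace ℝ (Fin d))) (abar : ℝ), IsProbabilityMeasure μ₀ →
        Integrable (fun x => ‖x‖ ^ 2) μ₀ → abar ∈ Set.Icc 0 r →
        let p := gaussMixture d (1 - abar) (fun y => √abar • y) μ₀
        Integrable (fun x => p x * log (p x / gaussV d 1 0 x)) ∧
          relEntropy volume p (gaussV d 1 0) ≤
            1 / 2 * (d * (1 - abar) - d + abar * (∫ y, ‖y‖ ^ 2 ∂μ₀) - d * log (1 - abar)) ∧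
          relEntropy volume p (gaussV d 1 0) ≤ C * abar * ((∫ y, ‖y‖ ^ 2 ∂μ₀) + d) := by
  refine ⟨1 / (2 * (1 - r)), by have := sub_pos.2 hr; positivity, ?_⟩
  intro d μ₀ abar _ hsq ⟨ha, har⟩ p
  have hv : 0 < 1 - abar := by linarith
  have hmem : MemLp (fun y => √abar • y) 2 μ₀ :=
    MemLp.const_smul (f := fun y => y)
      ((memLp_two_iff_integrable_sq_norm aestronglyMeasurable_id).2 hsq) √abar
  have hle := relEntropy_gaussMixture_le hv hmem
  simp_rw [norm_smul, mul_pow, norm_of_nonneg (sqrt_nonneg _), sq_sqrt ha, integral_const_mul]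
    at hle
  exact ⟨integrable_gaussMixture_mul_log_div hv hmem, hle, hle.trans <|
    half_mul_sub_log_one_sub_le ha har hr (integral_nonneg fun y => by positivity) d.cast_nonneg⟩

/-- Let `X₀` be a random vector in `ℝ^d` with `E‖X₀‖² < ∞`, let
`ᾱ ∈ (0, 1/2]`, and let `X = √ᾱ X₀ + √(1−ᾱ) W` with `W ~ N(0, I_d)` independent of `X₀`.
Then `KL(p_X ∥ N(0,I_d)) ≤ (1/2)(d(1−ᾱ) − d + ᾱ E‖X₀‖² − d log(1−ᾱ))`; in particular
`KL(p_X ∥ N(0,I_d)) ≤ C ᾱ (E‖X₀‖² + d)` for some absolute constant `C > 0`. -/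
theorem stmt19 :
    ∃ C : ℝ, 0 < C ∧
      ∀ (d : ℕ) (μ₀ : MeasureTheory.Measure (EuclideanSpace ℝ (Fin d))) (abar : ℝ),
        1 ≤ d → MeasureTheory.IsProbabilityMeasure μ₀ →
        MeasureTheory.Integrable (fun x => ‖x‖ ^ 2) μ₀ →
        abar ∈ Set.Ioc (0 : ℝ) (1 / 2) →
        (∫ x, (∫ y, gaussV d (1 - abar) (Real.sqrt abar • y) x ∂μ₀) *
            Real.log ((∫ y, gaussV d (1 - abar) (Real.sqrt abar • y) x ∂μ₀) /
              gaussV d 1 0 x)) ≤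
            (1 / 2) * (d * (1 - abar) - d + abar * (∫ y, ‖y‖ ^ 2 ∂μ₀) -
              d * Real.log (1 - abar)) ∧
          (∫ x, (∫ y, gaussV d (1 - abar) (Real.sqrt abar • y) x ∂μ₀) *
              Real.log ((∫ y, gaussV d (1 - abar) (Real.sqrt abar • y) x ∂μ₀) /
                gaussV d 1 0 x)) ≤
            C * abar * ((∫ y, ‖y‖ ^ 2 ∂μ₀) + d) := by
  obtain ⟨C, hC, h⟩ := stmt19_general one_half_lt_one
  exact ⟨C, hC, fun d μ₀ abar _ hμ₀ hsq ha => (h d μ₀ abar hμ₀ hsq ⟨ha.1.le, ha.2⟩).2⟩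
end
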